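/- arXiv:2401.03204 — 4 statements merged into one kernel-verified Lean document; each statement's English description precedes it below -/
import Mathlib

section
/- Lemma 9: Let U₁₆ = 2 + η₁ + 2η₀ + 3η₃. If d > 3 is a prime divisor of gcd(U₁₆, (4^p − 1)/3), then one of the following holds: (1) d = 11; (2) d = 1 + 2p and 3p = 4(1−4y)² + 3; (3) d = 1 + 6p and 7p = 4(1−4y)² − 1; (4) d = 1 + 8p and p = 4(1−4y)² + 1. -/
open Finset

/-- The cyclotomic class `D_i` of order 4 modulo `p` with respect to the
primitive root `θ`: `{θ^(i+4j) mod p : 0 ≤ j < (p-1)/4}`. -/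
def cycD (p θ i : ℕ) : Finset ℕ :=
  (Finset.range ((p - 1) / 4)).image fun j => θ ^ (i + 4 * j) % p

/-- `η_i = Σ_{t ∈ D_i} 4^t` as an integer. -/
def eta4 (p θ : ℕ) (i : ℕ) : ℤ := ∑ t ∈ cycD p θ i, (4 : ℤ) ^ t

/-- `H = η₀ + η₂ − η₁ − η₃`. -/
def Hval (p θ : ℕ) : ℤ := eta4 p θ 0 + eta4 p θ 2 - eta4 p θ 1 - eta4 p θ 3


local notation "gI" => (Zsqrtd.mk 0 1 : GaussianInt)

lemma gI_four : gI ^ 4 = 1 := by decide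

lemma gI_pow_inj {n i : ℕ} (hi : i < 4) (h : gI ^ n = gI ^ i) : n % 4 = i := by
  have : gI ^ n = gI ^ (n % 4) := by
    conv_lhs => rw [← Nat.div_add_mod n 4, pow_add, pow_mul, gI_four, one_pow, one_mul]
  rw [this] at h
  have h4 : n % 4 < 4 := Nat.mod_lt _ (by norm_num)
  generalize n % 4 = m at *
  interval_cases m <;> interval_cases i <;> first | rfl | (exfalso; revert h; decide)

lemma pow_theta (p : ℕ) [Fact p.Prime] (θ : ℕ) (hθ : IsPrimitiveRoot (θ : ZMod p) (p - 1))
    (a : ZMod p) (ha : a ≠ 0) : ∃ n < p - 1, (θ : ZMod p) ^ n = a := by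
  have : NeZero (p - 1) := ⟨by have := (Fact.out : p.Prime).two_le; omega⟩
  exact hθ.eq_pow_of_pow_eq_one (ZMod.pow_card_sub_one_eq_one ha)

lemma exists_chi (p : ℕ) [Fact p.Prime] (hp8 : p % 8 = 5) (θ : ℕ)
    (hθ : IsPrimitiveRoot (θ : ZMod p) (p - 1)) :
    ∃ χ : MulChar (ZMod p) GaussianInt, χ (θ : ZMod p) = gI := by
  have hp := (Fact.out : p.Prime)
  have hne : p - 1 ≠ 0 := by have := hp.two_le; omega
  obtain ⟨g, hg⟩ : IsUnit (θ : ZMod p) := hθ.isUnit hne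
  have hgen : ∀ x, x ∈ Subgroup.zpowers g := by
    intro x
    obtain ⟨n, -, hn⟩ := pow_theta p θ hθ (x : ZMod p) x.ne_zero
    refine ⟨n, ?_⟩
    ext
    simp [hg, hn]
  let μ : GaussianIntˣ := ⟨gI, gI ^ 3, by decide, by decide⟩
  have hμ : μ ∈ rootsOfUnity (Fintype.card (ZMod p)ˣ) GaussianInt := by
    rw [mem_rootsOfUnity, ZMod.card_units]
    obtain ⟨k, hk⟩ : 4 ∣ p - 1 := by omega
    rw [hk, pow_mul]
    have : μ ^ 4 = 1 := by ext1; exact gI_four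
    rw [this, one_pow]
  refine ⟨MulChar.ofRootOfUnity hμ hgen, ?_⟩
  rw [← hg, MulChar.ofRootOfUnity_spec]

section
variable (p : ℕ) [Fact p.Prime] (hp8 : p % 8 = 5) (θ : ℕ)
    (hθ : IsPrimitiveRoot (θ : ZMod p) (p - 1)) (χ : MulChar (ZMod p) GaussianInt)
    (hχ : χ (θ : ZMod p) = gI)

include hθ hχ

lemma chi_cases (a : ZMod p) (ha : a ≠ 0) :
    χ a = 1 ∨ χ a = gI ∨ χ a = gI ^ 2 ∨ χ a = gI ^ 3 := by
  obtain ⟨n, -, rfl⟩ := pow_theta p θ hθ a ha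
  rw [map_pow, hχ]
  have : gI ^ n = gI ^ (n % 4) := by
    conv_lhs => rw [← Nat.div_add_mod n 4, pow_add, pow_mul, gI_four, one_pow, one_mul]
  rw [this]
  have h4 : n % 4 < 4 := Nat.mod_lt _ (by norm_num)
  generalize n % 4 = m at *
  interval_cases m <;> simp

include hp8

lemma mem_cycD (i : ℕ) (hi : i < 4) (t : ℕ) :
    t ∈ cycD p θ i ↔ t < p ∧ χ (t : ZMod p) = gI ^ i := by
  have hp := (Fact.out : p.Prime)
  simp only [cycD, Finset.mem_image, Finset.mem_range]
  constructor
  · rintro ⟨j, hj, rfl⟩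
    refine ⟨Nat.mod_lt _ hp.pos, ?_⟩
    simp [hχ, pow_add, pow_mul, gI_four]
  · rintro ⟨ht, h⟩
    have h0 : (t : ZMod p) ≠ 0 := by
      intro h0
      rw [h0, MulChar.map_zero] at h
      interval_cases i <;> revert h <;> decide
    obtain ⟨n, hn, hn'⟩ := pow_theta p θ hθ _ h0
    rw [← hn', map_pow, hχ] at h
    have := gI_pow_inj hi h
    refine ⟨n / 4, by omega, ?_⟩
    have h2 : i + 4 * (n / 4) = n := by omega
    rw [h2]
    have : ((θ ^ n : ℕ) : ZMod p) = (t : ℕ) := by push_cast; exact hn'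
    rw [ZMod.natCast_eq_natCast_iff'] at this
    rw [this, Nat.mod_eq_of_lt ht]

lemma sum_cycD {M : Type*} [AddCommMonoid M] (g : ZMod p → M) (i : ℕ) (hi : i < 4) :
    ∑ t ∈ cycD p θ i, g (t : ZMod p) = ∑ a : ZMod p, if χ a = gI ^ i then g a else 0 := by
  have hp := (Fact.out : p.Prime)
  rw [← Finset.sum_filter]
  refine Finset.sum_bij' (fun t _ => (t : ZMod p)) (fun a _ => a.val) ?_ ?_ ?_ ?_ ?_
  · intro t ht
    rw [mem_cycD p hp8 θ hθ χ hχ i hi] at ht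
    simp [ht.2]
  · intro a ha
    rw [mem_cycD p hp8 θ hθ χ hχ i hi]
    refine ⟨ZMod.val_lt a, ?_⟩
    simpa using ha
  · intro t ht
    rw [mem_cycD p hp8 θ hθ χ hχ i hi] at ht
    exact ZMod.val_cast_of_lt ht.1
  · intro a ha
    simp
  · intro t ht
    rfl

lemma chi_neg_one : χ (-1) = -1 := by
  have hp := (Fact.out : p.Prime)
  have h1 : (θ : ZMod p) ^ ((p - 1) / 2) = -1 := by
    have h2 : ((θ : ZMod p) ^ ((p - 1) / 2)) ^ 2 = 1 := by
      rw [← pow_mul, show (p - 1) / 2 * 2 = p - 1 by omega, hθ.pow_eq_one]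
    rw [sq] at h2
    rcases mul_self_eq_one_iff.mp h2 with h | h
    · exact absurd h (hθ.pow_ne_one_of_pos_of_lt (by omega) (by omega))
    · exact h
  rw [← h1, map_pow, hχ]
  obtain ⟨k, hk⟩ : ∃ k, (p - 1) / 2 = 4 * k + 2 := ⟨(p - 1) / 8, by omega⟩
  rw [hk, pow_add, pow_mul, gI_four, one_pow, one_mul]
  decide

section
variable {F : Type*} [Field F] (h2 : (2 : F) ≠ 0) (f : GaussianInt →+* F)

omit [Fact p.Prime] hp8 hθ hχ in
lemma fI_sq : f gI ^ 2 = -1 := by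
  rw [← map_pow, show gI ^ 2 = -1 by decide, map_neg, map_one]

omit hp8 in
lemma X_cases (a : ZMod p) (ha : a ≠ 0) : χ.ringHomComp f a = 1 ∨ χ.ringHomComp f a = f gI ∨
    χ.ringHomComp f a = -1 ∨ χ.ringHomComp f a = -f gI := by
  rw [MulChar.ringHomComp_apply]
  have hI := fI_sq f
  rcases chi_cases p θ hθ χ hχ a ha with h | h | h | h <;> rw [h]
  · simp
  · simp
  · rw [map_pow, hI]; simp
  · rw [map_pow, pow_succ, hI]; simp

omit hp8 in
lemma X_four : χ.ringHomComp f ^ 4 = 1 := by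
  have hI := fI_sq f
  ext a
  rw [MulChar.pow_apply_coe, MulChar.one_apply_coe]
  rcases X_cases p θ hθ χ hχ f a a.ne_zero with h | h | h | h <;> rw [h]
  · simp
  · linear_combination (f gI ^ 2 - 1) * hI
  · norm_num
  · linear_combination (f gI ^ 2 - 1) * hI

omit hp8 in
lemma X_inv : χ.ringHomComp (f.comp (starRingEnd GaussianInt)) = (χ.ringHomComp f)⁻¹ := by
  have hI := fI_sq f
  rw [eq_inv_iff_mul_eq_one]
  ext a
  rw [MulChar.mul_apply, MulChar.one_apply_coe, MulChar.ringHomComp_apply,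
    MulChar.ringHomComp_apply, RingHom.comp_apply, ← map_mul]
  rw [show (starRingEnd GaussianInt) (χ a) * χ a = 1 from ?_, map_one]
  rcases chi_cases p θ hθ χ hχ a a.ne_zero with h | h | h | h <;> rw [h] <;> decide

include h2
omit [Fact p.Prime] hp8 hθ hχ in
lemma fI_ne_one : f gI ≠ 1 := by
  have hI := fI_sq f
  intro h
  rw [h] at hI
  apply h2
  linear_combination hI

omit hp8 hθ in
lemma X_ne_one : χ.ringHomComp f ≠ 1 := by
  intro h
  have h1 : χ.ringHomComp f (θ : ZMod p) = f gI := by rw [MulChar.ringHomComp_apply, hχ]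
  have h0 : IsUnit (θ : ZMod p) := by
    by_contra h0
    rw [MulChar.map_nonunit _ h0] at hχ
    revert hχ; decide
  rw [h, MulChar.one_apply h0] at h1
  exact fI_ne_one h2 f h1.symm

omit hp8 hθ in
lemma X_sq_ne_one : χ.ringHomComp f ^ 2 ≠ 1 := by
  intro h
  have h1 : (χ.ringHomComp f ^ 2) (θ : ZMod p) = f gI ^ 2 := by
    rw [MulChar.pow_apply' _ (by norm_num), MulChar.ringHomComp_apply, hχ]
  have h0 : IsUnit (θ : ZMod p) := by
    by_contra h0
    rw [MulChar.map_nonunit _ h0] at hχ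
    revert hχ; decide
  rw [h, MulChar.one_apply h0, fI_sq] at h1
  apply h2
  linear_combination h1

lemma gauss_rel (ψ : AddChar (ZMod p) F) (hψ : ψ.IsPrimitive) :
    gaussSum (χ.ringHomComp f) ψ * gaussSum (χ.ringHomComp f ^ 3) ψ = -(p : F) ∧
    gaussSum (χ.ringHomComp f ^ 2) ψ ^ 2 = (p : F) ∧
    gaussSum (χ.ringHomComp f ^ 2) ψ * f (jacobiSum χ χ) = gaussSum (χ.ringHomComp f) ψ ^ 2 ∧
    gaussSum (χ.ringHomComp f ^ 2) ψ * f (star (jacobiSum χ χ))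
      = gaussSum (χ.ringHomComp f ^ 3) ψ ^ 2 := by
  have hJ := jacobiSum_ringHomComp χ χ f
  have hJ' := jacobiSum_ringHomComp χ χ (f.comp (starRingEnd GaussianInt))
  have hinv := X_inv p θ hθ χ hχ f
  have h4 := X_four p θ hθ χ hχ f
  have hX1 := X_ne_one p θ χ hχ h2 f
  have hX2 := X_sq_ne_one p θ χ hχ h2 f
  have hm : χ.ringHomComp f (-1) = -1 := by
    rw [MulChar.ringHomComp_apply, chi_neg_one p hp8 θ hθ χ hχ]; simp
  generalize χ.ringHomComp f = X at *
  have hX3 : X⁻¹ = X ^ 3 := by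
    rw [inv_eq_iff_mul_eq_one, ← pow_succ', h4]
  have hX22 : (X ^ 2)⁻¹ = X ^ 2 := by
    rw [inv_eq_iff_mul_eq_one, ← pow_add, h4]
  have key : ∀ Y : MulChar (ZMod p) F, gaussSum Y ψ⁻¹ = Y (-1) * gaussSum Y ψ := by
    intro Y
    have := gaussSum_mulShift Y ψ⁻¹ (-1 : (ZMod p)ˣ)
    rw [← this]
    congr 1
    rw [AddChar.inv_mulShift, AddChar.mulShift_mulShift]
    simp
  refine ⟨?_, ?_, ?_, ?_⟩
  · have := gaussSum_mul_gaussSum_eq_card hX1 hψ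
    rw [hX3, key, MulChar.pow_apply' _ (by norm_num), hm, ZMod.card] at this
    linear_combination -this
  · have := gaussSum_mul_gaussSum_eq_card hX2 hψ
    rw [hX22, key, MulChar.pow_apply' _ (by norm_num), hm, ZMod.card] at this
    linear_combination this
  · have := jacobiSum_mul_nontrivial (χ := X) (φ := X) (by rwa [← sq]) ψ
    rw [hJ, ← sq] at this
    rw [this, sq]
  · rw [hinv, hX3] at hJ'
    have e : X ^ 3 * X ^ 3 = X ^ 2 := by
      rw [← pow_add, show 3 + 3 = 4 + 2 from rfl, pow_add, h4, one_mul]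
    have := jacobiSum_mul_nontrivial (χ := X ^ 3) (φ := X ^ 3) (by rwa [e]) ψ
    rw [hJ', e, ← sq] at this
    rw [← this]
    rfl

end

omit [Fact p.Prime] hp8 hθ hχ in
lemma f_mk {F : Type*} [Field F] (f : GaussianInt →+* F) (z : GaussianInt) :
    f z = (z.re : F) + f gI * (z.im : F) := by
  have : z = (z.re : GaussianInt) + gI * (z.im : GaussianInt) := by
    ext <;> simp
  conv_lhs => rw [this]
  rw [map_add, map_mul, map_intCast, map_intCast]

omit hp8 in
lemma ind0 {F : Type*} [Field F] (f : GaussianInt →+* F) (a : ZMod p) :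
    4 * (if χ a = gI ^ 0 then (1 : F) else 0) = (1 : MulChar (ZMod p) F) a
      + χ.ringHomComp f a + (χ.ringHomComp f ^ 2) a + (χ.ringHomComp f ^ 3) a := by
  have hI := fI_sq f
  rw [MulChar.pow_apply' _ (by norm_num), MulChar.pow_apply' _ (by norm_num)]
  by_cases ha : a = 0
  · subst ha
    rw [MulChar.map_zero, MulChar.map_zero, MulChar.map_zero, if_neg (by decide)]; simp
  rw [MulChar.one_apply (Ne.isUnit ha), MulChar.ringHomComp_apply]
  rcases chi_cases p θ hθ χ hχ a ha with h | h | h | h <;> rw [h]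
  · rw [if_pos (by decide), map_one]; norm_num
  · rw [if_neg (by decide)]; linear_combination (-1 - f gI) * hI
  · rw [if_neg (by decide), map_pow, hI]; norm_num
  · rw [if_neg (by decide), map_pow, pow_succ, hI]; linear_combination (-1 + f gI) * hI

omit hp8 in
lemma ind1 {F : Type*} [Field F] (f : GaussianInt →+* F) (a : ZMod p) :
    4 * (if χ a = gI ^ 1 then (1 : F) else 0) = (1 : MulChar (ZMod p) F) a
      - f gI * χ.ringHomComp f a - (χ.ringHomComp f ^ 2) a
      + f gI * (χ.ringHomComp f ^ 3) a := by
  have hI := fI_sq f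
  rw [MulChar.pow_apply' _ (by norm_num), MulChar.pow_apply' _ (by norm_num)]
  by_cases ha : a = 0
  · subst ha
    rw [MulChar.map_zero, MulChar.map_zero, MulChar.map_zero, if_neg (by decide)]; simp
  rw [MulChar.one_apply (Ne.isUnit ha), MulChar.ringHomComp_apply]
  rcases chi_cases p θ hθ χ hχ a ha with h | h | h | h <;> rw [h]
  · rw [if_neg (by decide), map_one]; ring
  · rw [if_pos (by decide)]; linear_combination (3 - f gI ^ 2) * hI
  · rw [if_neg (by decide), map_pow, hI]; ring
  · rw [if_neg (by decide), map_pow, pow_succ, hI]; linear_combination (-1 + f gI ^ 2) * hI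

lemma count_sum {F : Type*} [Field F] (f : GaussianInt →+* F) :
    16 * (((cycD p θ 0).filter (fun a => (a + 1) % p ∈ cycD p θ 1)).card : F) =
    ∑ a : ZMod p, ((1 : MulChar (ZMod p) F) a
      + χ.ringHomComp f a + (χ.ringHomComp f ^ 2) a + (χ.ringHomComp f ^ 3) a) *
      ((1 : MulChar (ZMod p) F) (a + 1)
      - f gI * χ.ringHomComp f (a + 1) - (χ.ringHomComp f ^ 2) (a + 1)
      + f gI * (χ.ringHomComp f ^ 3) (a + 1)) := by
  have hp := (Fact.out : p.Prime)
  have h1 : (((cycD p θ 0).filter (fun a => (a + 1) % p ∈ cycD p θ 1)).card : F) =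
      ∑ t ∈ cycD p θ 0, (fun a : ZMod p => if χ (a + 1) = gI ^ 1 then (1 : F) else 0) t := by
    rw [Finset.card_filter]
    push_cast
    refine Finset.sum_congr rfl fun t _ => ?_
    have : ((t + 1) % p ∈ cycD p θ 1) ↔ χ ((t : ZMod p) + 1) = gI ^ 1 := by
      rw [mem_cycD p hp8 θ hθ χ hχ 1 (by norm_num)]
      simp [Nat.mod_lt _ hp.pos]
    simp only [this]
  rw [h1, sum_cycD p hp8 θ hθ χ hχ (fun a : ZMod p => if χ (a + 1) = gI ^ 1 then (1 : F) else 0) 0 (by norm_num), Finset.mul_sum]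
  refine Finset.sum_congr rfl fun a _ => ?_
  rw [← ind0 p θ hθ χ hχ f a, ← ind1 p θ hθ χ hχ f (a + 1)]
  split_ifs <;> norm_num

lemma count_val {F : Type*} [Field F] (f : GaussianInt →+* F) (h2 : (2 : F) ≠ 0)
    (hpF : (p : F) ≠ 0) (ψ : AddChar (ZMod p) F) (hψ : ψ.IsPrimitive) :
    16 * (((cycD p θ 0).filter (fun a => (a + 1) % p ∈ cycD p θ 1)).card : F) =
    p + 1 - (f (jacobiSum χ χ) + f (star (jacobiSum χ χ)))
      + 2 * f gI * (f (jacobiSum χ χ) - f (star (jacobiSum χ χ))) := by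
  rw [count_sum p hp8 θ hθ χ hχ f]
  obtain ⟨g1, g2, g3, g4⟩ := gauss_rel p hp8 θ hθ χ hχ h2 f ψ hψ
  have hJ := jacobiSum_ringHomComp χ χ f
  have hJ' := jacobiSum_ringHomComp χ χ (f.comp (starRingEnd GaussianInt))
  rw [show (f.comp (starRingEnd GaussianInt)) (jacobiSum χ χ) = f (star (jacobiSum χ χ)) from rfl]
    at hJ'
  have hinv := X_inv p θ hθ χ hχ f
  have h4 := X_four p θ hθ χ hχ f
  have hX1 := X_ne_one p θ χ hχ h2 f
  have hX2 := X_sq_ne_one p θ χ hχ h2 f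
  have hm : χ.ringHomComp f (-1) = -1 := by
    rw [MulChar.ringHomComp_apply, chi_neg_one p hp8 θ hθ χ hχ]; simp
  generalize f (jacobiSum χ χ) = J at *
  generalize f (star (jacobiSum χ χ)) = J' at *
  generalize χ.ringHomComp f = X at *
  have hX3 : X⁻¹ = X ^ 3 := by
    rw [inv_eq_iff_mul_eq_one, ← pow_succ', h4]
  have hX3' : X ^ 3 ≠ 1 := by
    rw [← hX3]; simpa using hX1
  have hX22 : (X ^ 2)⁻¹ = X ^ 2 := by
    rw [inv_eq_iff_mul_eq_one, ← pow_add, h4]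
  have hneg : ∀ x, X (-x) = - X x := by
    intro x; rw [← neg_one_mul, map_mul, hm]; ring
  have e12 : X * X ^ 2 = X ^ 3 := by rw [← pow_succ']
  have e32 : X ^ 3 * X ^ 2 = X := by
    rw [← pow_add, show 3 + 2 = 4 + 1 from rfl, pow_add, h4, one_mul, pow_one]
  have j12 : jacobiSum X (X ^ 2) = -J := by
    have := jacobiSum_mul_nontrivial (χ := X) (φ := X ^ 2) (by rwa [e12]) ψ
    rw [e12] at this
    apply mul_left_cancel₀ hpF
    linear_combination (jacobiSum X (X ^ 2)) * g1 - gaussSum X ψ * this - J * g2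
      + gaussSum (X ^ 2) ψ * g3
  have j32 : jacobiSum (X ^ 3) (X ^ 2) = -J' := by
    have := jacobiSum_mul_nontrivial (χ := X ^ 3) (φ := X ^ 2) (by rwa [e32]) ψ
    rw [e32] at this
    apply mul_left_cancel₀ hpF
    linear_combination (jacobiSum (X ^ 3) (X ^ 2)) * g1 - gaussSum (X ^ 3) ψ * this - J' * g2
      + gaussSum (X ^ 2) ψ * g4
  have j13 : jacobiSum X (X ^ 3) = 1 := by
    have := jacobiSum_nontrivial_inv hX1
    rw [hX3, hm] at this; rw [this]; ring
  have j22 : jacobiSum (X ^ 2) (X ^ 2) = -1 := by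
    have := jacobiSum_nontrivial_inv hX2
    rw [hX22, MulChar.pow_apply' _ (by norm_num), hm] at this; rw [this]; ring
  have j33 : jacobiSum (X ^ 3) (X ^ 3) = J' := by
    rw [← hX3, ← hinv, hJ']
  have j00 : jacobiSum (1 : MulChar (ZMod p) F) 1 = _ := jacobiSum_one_one
  rw [ZMod.card] at j00
  have j01 := jacobiSum_one_nontrivial hX1
  have j02 := jacobiSum_one_nontrivial hX2
  have j03 := jacobiSum_one_nontrivial hX3'
  have j10 := jacobiSum_comm 1 X
  have j20 := jacobiSum_comm 1 (X ^ 2)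
  have j30 := jacobiSum_comm 1 (X ^ 3)
  have j21 := jacobiSum_comm X (X ^ 2)
  have j31 := jacobiSum_comm X (X ^ 3)
  have j23 := jacobiSum_comm (X ^ 3) (X ^ 2)
  have hI := fI_sq f
  generalize f gI = I at *
  rw [← Equiv.sum_comp (Equiv.neg (ZMod p))]
  have expand : ∑ i : ZMod p, ((1 : MulChar (ZMod p) F) ((Equiv.neg (ZMod p)) i)
      + X ((Equiv.neg (ZMod p)) i) + (X ^ 2) ((Equiv.neg (ZMod p)) i)
      + (X ^ 3) ((Equiv.neg (ZMod p)) i)) *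
      ((1 : MulChar (ZMod p) F) ((Equiv.neg (ZMod p)) i + 1)
      - I * X ((Equiv.neg (ZMod p)) i + 1) - (X ^ 2) ((Equiv.neg (ZMod p)) i + 1)
      + I * (X ^ 3) ((Equiv.neg (ZMod p)) i + 1)) =
      (jacobiSum (1 : MulChar (ZMod p) F) 1 - I * jacobiSum 1 X - jacobiSum 1 (X ^ 2) + I * jacobiSum 1 (X ^ 3))
      - (jacobiSum X 1 - I * jacobiSum X X - jacobiSum X (X ^ 2) + I * jacobiSum X (X ^ 3))
      + (jacobiSum (X ^ 2) 1 - I * jacobiSum (X ^ 2) X - jacobiSum (X ^ 2) (X ^ 2)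
        + I * jacobiSum (X ^ 2) (X ^ 3))
      - (jacobiSum (X ^ 3) 1 - I * jacobiSum (X ^ 3) X - jacobiSum (X ^ 3) (X ^ 2)
        + I * jacobiSum (X ^ 3) (X ^ 3)) := by
    simp only [jacobiSum, Finset.mul_sum, ← Finset.sum_add_distrib, ← Finset.sum_sub_distrib]
    refine Finset.sum_congr rfl fun x _ => ?_
    have o : (1 : MulChar (ZMod p) F) (-x) = (1 : MulChar (ZMod p) F) x := by
      by_cases hx : x = 0
      · simp [hx]
      · rw [MulChar.one_apply (Ne.isUnit hx), MulChar.one_apply (Ne.isUnit (neg_ne_zero.mpr hx))]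
    rw [Equiv.neg_apply, o, neg_add_eq_sub]
    simp only [MulChar.pow_apply' X (two_ne_zero), MulChar.pow_apply' X (three_ne_zero), hneg]
    ring
  rw [expand]
  rw [← j10, ← j20, ← j30, ← j21, ← j31, ← j23, j00, j01, j02, j03, j12, j13, j22, j32, j33, hJ]
  ring


lemma uv_rel : (jacobiSum χ χ).re ^ 2 + (jacobiSum χ χ).im ^ 2 = (p : ℤ) ∧
    16 * (((cycD p θ 0).filter (fun a => (a + 1) % p ∈ cycD p θ 1)).card : ℤ) =
    p + 1 - 2 * (jacobiSum χ χ).re - 4 * (jacobiSum χ χ).im := by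
  have hp := (Fact.out : p.Prime)
  have hpC : (p : ℂ) ≠ 0 := by exact_mod_cast hp.ne_zero
  have h2 : (2 : ℂ) ≠ 0 := two_ne_zero
  let f := GaussianInt.toComplex
  have hψ := ZMod.isPrimitive_stdAddChar p
  obtain ⟨g1, g2, g3, g4⟩ := gauss_rel p hp8 θ hθ χ hχ h2 f _ hψ
  have hc := count_val p hp8 θ hθ χ hχ f h2 hpC _ hψ
  have hI := fI_sq f
  rw [f_mk f (jacobiSum χ χ)] at g3 hc
  rw [f_mk f (star (jacobiSum χ χ))] at g4 hc
  simp only [Zsqrtd.re_star, Zsqrtd.im_star, Int.cast_neg] at g4 hc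
  generalize (jacobiSum χ χ).re = u at *
  generalize (jacobiSum χ χ).im = v at *
  generalize f gI = I at *
  generalize gaussSum (χ.ringHomComp f) ZMod.stdAddChar = G1 at *
  generalize gaussSum (χ.ringHomComp f ^ 2) ZMod.stdAddChar = G2 at *
  generalize gaussSum (χ.ringHomComp f ^ 3) ZMod.stdAddChar = G3 at *
  constructor
  · have : (p : ℂ) * ((u : ℂ) ^ 2 + (v : ℂ) ^ 2) = p * p := by
      have e : (G2 * (u + I * v)) * (G2 * (u + I * -v)) = (G1 * G3) ^ 2 := by
        rw [g3, g4]; ring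
      rw [g1] at e
      linear_combination e + G2 ^ 2 * v ^ 2 * hI - (u ^ 2 + v ^ 2) * g2
    have := mul_left_cancel₀ hpC this
    exact_mod_cast this
  · have : 16 * (((cycD p θ 0).filter (fun a => (a + 1) % p ∈ cycD p θ 1)).card : ℂ) =
      p + 1 - 2 * u - 4 * v := by
      rw [hc]
      linear_combination 4 * v * hI
    exact_mod_cast this

lemma y_val (x y : ℤ) (hx : x % 4 = 1) (hxy : (p : ℤ) = x ^ 2 + 4 * y ^ 2)
    (hy : 16 * (((cycD p θ 0).filter (fun a => (a + 1) % p ∈ cycD p θ 1)).card : ℤ)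
        = (p : ℤ) + 1 + 2 * x - 8 * y) : (jacobiSum χ χ).im = 2 * y := by
  obtain ⟨h1, h2⟩ := uv_rel p hp8 θ hθ χ hχ
  have hp := (Fact.out : p.Prime)
  have hpp : Prime (p : ℤ) := Nat.prime_iff_prime_int.mp hp
  rw [hy] at h2
  generalize (jacobiSum χ χ).re = u at *
  generalize (jacobiSum χ χ).im = v at *
  have hu : u = 4 * y - 2 * v - x := by linarith
  have huo : u % 2 = 1 := by omega
  have hve : v % 2 = 0 := by
    obtain ⟨k, hk⟩ : ∃ k, u = 2 * k + 1 := ⟨u / 2, by omega⟩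
    rcases Int.emod_two_eq_zero_or_one v with h | h
    · exact h
    · obtain ⟨l, hl⟩ : ∃ l, v = 2 * l + 1 := ⟨v / 2, by omega⟩
      exfalso
      have : (p : ℤ) = 2 * (2 * k ^ 2 + 2 * k + 2 * l ^ 2 + 2 * l + 1) := by
        rw [← h1, hk, hl]; ring
      omega
  obtain ⟨w, rfl⟩ : ∃ w, v = 2 * w := ⟨v / 2, by omega⟩
  have hpos : (0 : ℤ) < p := by exact_mod_cast hp.pos
  have hdvd : (p : ℤ) ∣ (x * w - u * y) * (x * w + u * y) :=
    ⟨w ^ 2 - y ^ 2, by linear_combination (-w ^ 2) * hxy - y ^ 2 * h1⟩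
  have key : ∀ s : ℤ, ∀ r : ℤ, r ^ 2 + 4 * s ^ 2 = (p : ℤ) ^ 2 → (p : ℤ) ∣ s → s = 0 := by
    rintro s r hr ⟨k, rfl⟩
    by_contra hk
    have hk0 : k ≠ 0 := by rintro rfl; simp at hk
    have : 1 ≤ k ^ 2 := by have := sq_pos_of_ne_zero hk0; linarith
    nlinarith [sq_nonneg r, mul_pos hpos hpos, mul_le_mul_of_nonneg_left this (mul_pos hpos hpos).le]
  have hzero : (x * w - u * y) * (x * w + u * y) = 0 := by
    rcases hpp.dvd_or_dvd hdvd with h | h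
    · rw [key _ (x * u + 4 * y * w) (by rw [sq (p : ℤ)]; nth_rw 1 [hxy]; rw [← h1]; ring) h, zero_mul]
    · rw [key _ (x * u - 4 * y * w) (by rw [sq (p : ℤ)]; nth_rw 1 [hxy]; rw [← h1]; ring) h, mul_zero]
  have hyw : (p : ℤ) * (w ^ 2 - y ^ 2) = 0 := by
    rw [← hzero]; linear_combination (w ^ 2) * hxy + y ^ 2 * h1
  have hyw2 : w ^ 2 - y ^ 2 = 0 := by
    rcases mul_eq_zero.mp hyw with h | h
    · exact absurd h hpos.ne'
    · exact h
  have hyw3 : (w - y) * (w + y) = 0 := by linear_combination hyw2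
  rcases mul_eq_zero.mp hyw3 with h | h
  · linarith
  · have hw : w = -y := by linarith
    have : (x - u) * (x + u) = 0 := by rw [hw] at h1; linear_combination hxy.symm - h1
    rcases mul_eq_zero.mp this with h' | h'
    · omega
    · omega

lemma periods {F : Type*} [Field F] (f : GaussianInt →+* F) (h2 : (2 : F) ≠ 0)
    (h4 : IsPrimitiveRoot (4 : F) p) (x y : ℤ) (hx : x % 4 = 1)
    (hxy : (p : ℤ) = x ^ 2 + 4 * y ^ 2)
    (hy : 16 * (((cycD p θ 0).filter (fun a => (a + 1) % p ∈ cycD p θ 1)).card : ℤ)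
        = (p : ℤ) + 1 + 2 * x - 8 * y)
    (hU : ((2 + eta4 p θ 1 + 2 * eta4 p θ 0 + 3 * eta4 p θ 3 : ℤ) : F) = 0) :
    (5 * (p : F) + 1) ^ 2 = 4 * p * (1 - 4 * (y : F)) ^ 2 := by
  have hp := (Fact.out : p.Prime)
  have hψ := AddChar.zmodChar_primitive_of_primitive_root p h4
  set ψ := AddChar.zmodChar p ((IsPrimitiveRoot.iff_def (4 : F) p).mp h4).left with hψd
  obtain ⟨g1, g2, g3, g4⟩ := gauss_rel p hp8 θ hθ χ hχ h2 f ψ hψ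
  have hI := fI_sq f
  have hv := y_val p hp8 θ hθ χ hχ x y hx hxy hy
  rw [f_mk f (jacobiSum χ χ), hv] at g3
  rw [f_mk f (star (jacobiSum χ χ)), Zsqrtd.re_star, Zsqrtd.im_star, hv] at g4
  have hE : ∀ i < 4, ((eta4 p θ i : ℤ) : F) = ∑ a : ZMod p, if χ a = gI ^ i then ψ a else 0 := by
    intro i hi
    rw [← sum_cycD p hp8 θ hθ χ hχ ψ i hi, eta4]
    push_cast
    refine Finset.sum_congr rfl fun t _ => ?_
    rw [hψd, AddChar.zmodChar_apply']
  have hψ1 : ψ ≠ 1 := by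
    rw [AddChar.zmod_char_ne_one_iff]
    intro h
    have h1 := AddChar.zmodChar_apply' ((IsPrimitiveRoot.iff_def (4 : F) p).mp h4).left 1
    rw [← hψd, Nat.cast_one, h, pow_one] at h1
    exact h4.ne_one hp.one_lt h1.symm
  have s0 : gaussSum (1 : MulChar (ZMod p) F) ψ = -1 := gaussSum_one_left hψ1
  have cases0 : ∀ a : ZMod p, a = 0 ∨ a ≠ 0 := fun a => em _
  have r0 : gaussSum (1 : MulChar (ZMod p) F) ψ = (eta4 p θ 0 : ℤ) + (eta4 p θ 1 : ℤ)
      + (eta4 p θ 2 : ℤ) + (eta4 p θ 3 : ℤ) := by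
    rw [hE 0 (by norm_num), hE 1 (by norm_num), hE 2 (by norm_num), hE 3 (by norm_num)]
    simp only [gaussSum, Finset.mul_sum, ← Finset.sum_add_distrib, ← Finset.sum_sub_distrib]
    refine Finset.sum_congr rfl fun a _ => ?_
    by_cases ha : a = 0
    · subst ha
      rw [MulChar.map_zero, MulChar.map_zero, if_neg (by decide), if_neg (by decide),
        if_neg (by decide), if_neg (by decide)]; ring
    · rw [MulChar.one_apply (Ne.isUnit ha)]
      rcases chi_cases p θ hθ χ hχ a ha with h | h | h | h <;> rw [h] <;>
        simp (decide := true)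
  have r1 : gaussSum (χ.ringHomComp f) ψ = (eta4 p θ 0 : ℤ) + f gI * (eta4 p θ 1 : ℤ)
      - (eta4 p θ 2 : ℤ) - f gI * (eta4 p θ 3 : ℤ) := by
    rw [hE 0 (by norm_num), hE 1 (by norm_num), hE 2 (by norm_num), hE 3 (by norm_num)]
    simp only [gaussSum, Finset.mul_sum, ← Finset.sum_add_distrib, ← Finset.sum_sub_distrib]
    refine Finset.sum_congr rfl fun a _ => ?_
    rw [MulChar.ringHomComp_apply]
    by_cases ha : a = 0
    · subst ha
      rw [MulChar.map_zero, if_neg (by decide), if_neg (by decide),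
        if_neg (by decide), if_neg (by decide), map_zero]; ring
    · rcases chi_cases p θ hθ χ hχ a ha with h | h | h | h <;> rw [h] <;>
        simp (decide := true) [-map_pow]
      · rw [map_pow, hI]; ring
      · rw [map_pow, pow_succ, hI]; ring
  have r2 : gaussSum (χ.ringHomComp f ^ 2) ψ = (eta4 p θ 0 : ℤ) - (eta4 p θ 1 : ℤ)
      + (eta4 p θ 2 : ℤ) - (eta4 p θ 3 : ℤ) := by
    rw [hE 0 (by norm_num), hE 1 (by norm_num), hE 2 (by norm_num), hE 3 (by norm_num)]
    simp only [gaussSum, Finset.mul_sum, ← Finset.sum_add_distrib, ← Finset.sum_sub_distrib]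
    refine Finset.sum_congr rfl fun a _ => ?_
    rw [MulChar.pow_apply' _ (by norm_num), MulChar.ringHomComp_apply]
    by_cases ha : a = 0
    · subst ha
      rw [MulChar.map_zero, if_neg (by decide), if_neg (by decide),
        if_neg (by decide), if_neg (by decide), map_zero]; ring
    · rcases chi_cases p θ hθ χ hχ a ha with h | h | h | h <;> rw [h] <;>
        simp (decide := true) [-map_pow]
      · rw [hI]; ring
      · rw [map_pow, hI]; ring
      · rw [map_pow]; linear_combination (ψ a) * (f gI ^ 4 - f gI ^ 2 + 1) * hI
  have r3 : gaussSum (χ.ringHomComp f ^ 3) ψ = (eta4 p θ 0 : ℤ) - f gI * (eta4 p θ 1 : ℤ)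
      - (eta4 p θ 2 : ℤ) + f gI * (eta4 p θ 3 : ℤ) := by
    rw [hE 0 (by norm_num), hE 1 (by norm_num), hE 2 (by norm_num), hE 3 (by norm_num)]
    simp only [gaussSum, Finset.mul_sum, ← Finset.sum_add_distrib, ← Finset.sum_sub_distrib]
    refine Finset.sum_congr rfl fun a _ => ?_
    rw [MulChar.pow_apply' _ (by norm_num), MulChar.ringHomComp_apply]
    by_cases ha : a = 0
    · subst ha
      rw [MulChar.map_zero, if_neg (by decide), if_neg (by decide),
        if_neg (by decide), if_neg (by decide), map_zero]; ring
    · rcases chi_cases p θ hθ χ hχ a ha with h | h | h | h <;> rw [h] <;>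
        simp (decide := true) [-map_pow]
      · linear_combination (ψ a * f gI) * hI
      · rw [map_pow, hI]; ring
      · rw [map_pow]; left; linear_combination (f gI) * (f gI ^ 2 - 1) * (f gI ^ 4 + 1) * hI
  rw [r1, r2] at g3
  rw [r3, r2] at g4
  rw [r1, r3] at g1
  rw [r2] at g2
  rw [r0] at s0
  push_cast at hU g3 g4
  have hI0 : f gI ≠ 0 := by
    intro h; rw [h] at hI; norm_num at hI
  generalize ((eta4 p θ 0 : ℤ) : F) = e0 at *
  generalize ((eta4 p θ 1 : ℤ) : F) = e1 at *
  generalize ((eta4 p θ 2 : ℤ) : F) = e2 at *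
  generalize ((eta4 p θ 3 : ℤ) : F) = e3 at *
  generalize (((jacobiSum χ χ).re : ℤ) : F) = u at *
  generalize f gI = I at *
  have hAB : (e0 - e2) * (e1 - e3) = y * (e0 - e1 + e2 - e3) := by
    have : (2 * 2 * I) * ((e0 - e2) * (e1 - e3)) = (2 * 2 * I) * (y * (e0 - e1 + e2 - e3)) := by
      linear_combination g4 - g3
    exact mul_left_cancel₀ (mul_ne_zero (mul_ne_zero h2 h2) hI0) this
  have hA2 : (e0 - e2) ^ 2 + (e1 - e3) ^ 2 = -(p : F) := by
    linear_combination g1 + (e1 - e3) ^ 2 * hI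
  obtain ⟨H, hH⟩ : ∃ H, H = e0 - e1 + e2 - e3 := ⟨_, rfl⟩
  have hlin : H - 1 = 2 * ((e0 - e2) - (e1 - e3)) := by
    have : (2 : F) * (H - 1) = 2 * (2 * ((e0 - e2) - (e1 - e3))) := by
      rw [hH]
      linear_combination (-4) * hU + 6 * s0
    exact mul_left_cancel₀ h2 this
  rw [← hH] at g2 hAB
  have h5 : 5 * (p : F) + 1 = 2 * H * (1 - 4 * y) := by
    have : (H - 1) ^ 2 = 4 * ((e0 - e2) ^ 2 + (e1 - e3) ^ 2 - 2 * ((e0 - e2) * (e1 - e3))) := by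
      rw [hlin]; ring
    rw [hA2, hAB] at this
    linear_combination this - g2
  rw [h5]
  linear_combination 4 * (1 - 4 * (y : F)) ^ 2 * g2

end

set_option maxHeartbeats 2000000 in
/-- The final arithmetic. -/
lemma final_arith (p : ℕ) (hp : p.Prime) (hp8 : p % 8 = 5)
    (x y : ℤ) (hx : x % 4 = 1) (hxy : (p : ℤ) = x ^ 2 + 4 * y ^ 2) (d k : ℤ)
    (hd : Prime d) (hk : 0 < k) (hdk : d = 1 + 2 * k * p) (hk2 : k ≠ 2)
    (hN : d ∣ (5 * (p : ℤ) + 1) ^ 2 - 4 * p * (1 - 4 * y) ^ 2) :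
    d = 11 ∨ (d = 1 + 2 * (p : ℤ) ∧ 3 * (p : ℤ) = 4 * (1 - 4 * y) ^ 2 + 3) ∨
      (d = 1 + 6 * (p : ℤ) ∧ 7 * (p : ℤ) = 4 * (1 - 4 * y) ^ 2 - 1) ∨
      (d = 1 + 8 * (p : ℤ) ∧ (p : ℤ) = 4 * (1 - 4 * y) ^ 2 + 1) := by
  have hP8 : (p : ℤ) % 8 = 5 := by omega
  have hP : (5 : ℤ) ≤ p := by omega
  have hprime : p = 5 ∨ 6 ≤ p := by omega
  generalize hPP : (p : ℤ) = P at *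
  have hx2 : 1 ≤ x ^ 2 := by
    have : x ≠ 0 := by omega
    have := sq_pos_of_ne_zero this
    linarith
  obtain ⟨m, hm⟩ := hN
  have hNpos : 0 < (5 * P + 1) ^ 2 - 4 * P * (1 - 4 * y) ^ 2 := by
    have h : 0 < 25 * P + 10 - 4 * (1 - 4 * y) ^ 2 := by nlinarith [sq_nonneg (y + 1)]
    nlinarith
  have hdpos : 0 < d := by rw [hdk]; positivity
  have hmpos : 0 < m := by
    rw [hm] at hNpos
    exact (mul_pos_iff_of_pos_left hdpos).mp hNpos
  have hj : P ∣ m - 1 := by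
    refine ⟨25 * P + 10 - 4 * (1 - 4 * y) ^ 2 - 2 * k * m, ?_⟩
    rw [hdk] at hm
    linear_combination -hm
  obtain ⟨j, hj⟩ := hj
  have hj0 : 0 ≤ j := by
    by_contra h
    nlinarith
  have hmj : m = 1 + j * P := by linarith
  have hyo : y % 2 = 1 := by
    obtain ⟨l, rfl⟩ : ∃ l, x = 4 * l + 1 := ⟨x / 4, by omega⟩
    by_contra h
    obtain ⟨n, rfl⟩ : ∃ n, y = 2 * n := ⟨y / 2, by omega⟩
    have : P = 8 * (2 * l ^ 2 + l + 2 * n ^ 2) + 1 := by rw [hxy]; ring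
    omega
  obtain ⟨n, hn⟩ : ∃ n, y = 2 * n + 1 := ⟨y / 2, by omega⟩
  obtain ⟨q, hq⟩ : ∃ q, P = 8 * q + 5 := ⟨P / 8, by omega⟩
  have heq : 2 * k + j + 2 * k * j * P = 25 * P + 10 - 4 * (1 - 4 * y) ^ 2 := by
    have : P * (2 * k + j + 2 * k * j * P) = P * (25 * P + 10 - 4 * (1 - 4 * y) ^ 2) := by
      rw [hdk, hmj] at hm
      linear_combination -hm
    exact mul_left_cancel₀ (by omega) this
  have hj8 : j % 8 = 3 := by
    have h1 : (2 * k + 1) * (j + 1) % 8 = 4 := by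
      have : (2 * k + 1) * (j + 1) = 8 * (25 * q + 12 - 24 * n - 32 * n ^ 2
          - 2 * k * j * q - k * j) + 4 := by
        rw [hq, hn] at heq
        linear_combination heq
      omega
    rw [Int.mul_emod] at h1
    have ha : (2 * k + 1) % 8 = 1 ∨ (2 * k + 1) % 8 = 3 ∨ (2 * k + 1) % 8 = 5
      ∨ (2 * k + 1) % 8 = 7 := by omega
    rcases ha with ha | ha | ha | ha <;> rw [ha] at h1 <;> omega
  have hkj : k * j ≤ 12 := by
    by_contra h
    have : 13 ≤ k * j := by omega
    nlinarith [sq_nonneg (1 - 4 * y)]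
  have hj12 : j ≤ 12 := by nlinarith
  have hj' : j = 3 ∨ j = 11 := by omega
  rcases hj' with rfl | rfl
  · have : k ≤ 4 := by omega
    have : k = 1 ∨ k = 3 ∨ k = 4 := by omega
    rcases this with rfl | rfl | rfl
    · left
      have h1 : 19 * P + 5 = 4 * (1 - 4 * y) ^ 2 := by linarith
      have hy3 : -3 < y ∧ y < 3 := by constructor <;> nlinarith
      obtain ⟨ha, hb⟩ := hy3
      have : y = -1 ∨ y = 1 := by omega
      rcases this with rfl | rfl
      · omega
      · omega
    · right; right; left
      constructor <;> linarith
    · right; right; right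
      constructor <;> linarith
  · have : k = 1 := by omega
    subst this
    right; left
    constructor <;> linarith

lemma cast_zero_aux {F : Type*} [Field F] (p : ℕ) (y : ℤ)
    (h : (5 * (p : F) + 1) ^ 2 = 4 * p * (1 - 4 * (y : F)) ^ 2) :
    (((5 * (p : ℤ) + 1) ^ 2 - 4 * p * (1 - 4 * y) ^ 2 : ℤ) : F) = 0 := by
  push_cast
  rw [h, sub_self]

theorem lemma9
    (p : ℕ) (hp : p.Prime) (hp8 : p % 8 = 5)
    (x y : ℤ) (hx : x % 4 = 1) (hxy : (p : ℤ) = x ^ 2 + 4 * y ^ 2)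
    (θ : ℕ) (hθ : IsPrimitiveRoot (θ : ZMod p) (p - 1))
    (hy : 16 * (((cycD p θ 0).filter (fun a => (a + 1) % p ∈ cycD p θ 1)).card : ℤ)
        = (p : ℤ) + 1 + 2 * x - 8 * y)
    (d : ℤ) (hd : Prime d) (hd3 : 3 < d)
    (hdvd : d ∣ (Int.gcd (2 + eta4 p θ 1 + 2 * eta4 p θ 0 + 3 * eta4 p θ 3) (((4 : ℤ) ^ p - 1) / 3) : ℤ)) :
    d = 11 ∨ (d = 1 + 2 * (p : ℤ) ∧ 3 * (p : ℤ) = 4 * (1 - 4 * y) ^ 2 + 3) ∨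
      (d = 1 + 6 * (p : ℤ) ∧ 7 * (p : ℤ) = 4 * (1 - 4 * y) ^ 2 - 1) ∨
      (d = 1 + 8 * (p : ℤ) ∧ (p : ℤ) = 4 * (1 - 4 * y) ^ 2 + 1) := by
  have hpF : Fact p.Prime := ⟨hp⟩
  obtain ⟨D, rfl⟩ : ∃ D : ℕ, d = D := ⟨d.toNat, by omega⟩
  have hD : D.Prime := Nat.prime_iff_prime_int.mpr hd
  have hDF : Fact D.Prime := ⟨hD⟩
  have hD3 : 3 < D := by exact_mod_cast hd3
  have hdU := hdvd.trans (Int.gcd_dvd_left _ _)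
  have hd4' := hdvd.trans (Int.gcd_dvd_right _ _)
  have hd4 : (D : ℤ) ∣ 4 ^ p - 1 := by
    refine hd4'.trans (Int.ediv_dvd_of_dvd ?_)
    simpa using sub_dvd_pow_sub_pow (4 : ℤ) 1 p
  have h4p : (4 : ZMod D) ^ p = 1 := by
    have := (ZMod.intCast_zmod_eq_zero_iff_dvd _ D).mpr hd4
    push_cast at this
    exact sub_eq_zero.mp this
  have hne : ∀ n : ℕ, 0 < n → n < D → (n : ZMod D) ≠ 0 := by
    intro n h0 h1 h
    rw [ZMod.natCast_eq_zero_iff] at h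
    exact absurd (Nat.le_of_dvd h0 h) (by omega)
  have h2 : (2 : ZMod D) ≠ 0 := by exact_mod_cast hne 2 (by norm_num) (by omega)
  have h3 : (3 : ZMod D) ≠ 0 := by exact_mod_cast hne 3 (by norm_num) (by omega)
  have h41 : (4 : ZMod D) ≠ 1 := by
    intro h
    apply h3
    linear_combination h
  have hord : orderOf (4 : ZMod D) = p := orderOf_eq_prime h4p h41
  have hprim : IsPrimitiveRoot (4 : ZMod D) p := by
    rw [← hord]; exact IsPrimitiveRoot.orderOf _
  have hDodd : D % 2 = 1 := hD.eq_two_or_odd.resolve_left (by omega)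
  obtain ⟨k, hk⟩ : p ∣ D / 2 := by
    rw [← hord]
    apply orderOf_dvd_of_pow_eq_one
    rw [show (4 : ZMod D) = 2 ^ 2 by norm_num, ← pow_mul, show 2 * (D / 2) = D - 1 by omega]
    exact ZMod.pow_card_sub_one_eq_one h2
  have hDk : D = 1 + 2 * k * p := by
    have : 2 * k * p = 2 * (p * k) := by ring
    omega
  have hk0 : 0 < k := by
    rcases Nat.eq_zero_or_pos k with h | h
    · subst h; simp at hDk; omega
    · exact h
  have hk2 : k ≠ 2 := by
    rintro rfl
    have hsq : IsSquare (2 : ZMod D) := by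
      rw [ZMod.euler_criterion D h2, hk, mul_comm, pow_mul]
      rw [show (2 : ZMod D) ^ 2 = 4 by norm_num, h4p]
    rw [ZMod.exists_sq_eq_two_iff (by omega)] at hsq
    omega
  obtain ⟨χ, hχ⟩ := exists_chi p hp8 θ hθ
  let K := AlgebraicClosure (ZMod D)
  obtain ⟨I, hI⟩ := IsAlgClosed.exists_pow_nat_eq (-1 : K) (n := 2) (by norm_num)
  let f : GaussianInt →+* K := Zsqrtd.lift ⟨I, by rw [← sq, hI]; simp⟩
  have hinj : Function.Injective (algebraMap (ZMod D) K) := (algebraMap (ZMod D) K).injective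
  have h2K : (2 : K) ≠ 0 := by
    intro h
    apply h2
    apply hinj
    rw [map_ofNat, map_zero]; exact h
  have h4K : IsPrimitiveRoot (4 : K) p := by
    have := hprim.map_of_injective hinj
    rwa [map_ofNat] at this
  have hUK : ((2 + eta4 p θ 1 + 2 * eta4 p θ 0 + 3 * eta4 p θ 3 : ℤ) : K) = 0 := by
    have := (ZMod.intCast_zmod_eq_zero_iff_dvd _ D).mpr hdU
    rw [← map_intCast (algebraMap (ZMod D) K), this, map_zero]
  have hfin := periods p hp8 θ hθ χ hχ f h2K h4K x y hx hxy hy hUK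
  refine final_arith p hp hp8 x y hx hxy D k hd (by exact_mod_cast hk0)
    (by exact_mod_cast hDk) (by exact_mod_cast hk2) ?_
  rw [← ZMod.intCast_zmod_eq_zero_iff_dvd _ D]
  apply hinj
  rw [map_intCast, map_zero]
  exact cast_zero_aux p y hfin
end

section
/- Theorem 2: For the quaternary sequences u₁ = φ[s₁, s₂], u₉ = φ[s₁+1, s₂], u₁₁ = φ[s₂+1, s₄] of period p, the 4-adic complexity satisfies Φ₄(u_i) ≥ ⌊log₄((4^p − 1)/(3(1+2p)) + 1)⌋ for i = 1, 9, 11. -/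
open Finset

/-- The binary sequence `s₁` with support set `D₀ ∪ D₁`. -/
def seqS1 (p θ : ℕ) (t : ℕ) : ℕ := if t ∈ cycD p θ 0 ∪ cycD p θ 1 then 1 else 0

/-- The binary sequence `s₂` with support set `D₀ ∪ D₃`. -/
def seqS2 (p θ : ℕ) (t : ℕ) : ℕ := if t ∈ cycD p θ 0 ∪ cycD p θ 3 then 1 else 0

/-- The binary sequence `s₃` with support set `D₁ ∪ D₂`. -/
def seqS3 (p θ : ℕ) (t : ℕ) : ℕ := if t ∈ cycD p θ 1 ∪ cycD p θ 2 then 1 else 0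

/-- The binary sequence `s₄` with support set `D₂ ∪ D₃`. -/
def seqS4 (p θ : ℕ) (t : ℕ) : ℕ := if t ∈ cycD p θ 2 ∪ cycD p θ 3 then 1 else 0

/-- The bitwise complement `s + 1` of a binary sequence. -/
def seqCompl (s : ℕ → ℕ) (t : ℕ) : ℕ := 1 - s t

/-- The inverse Gray mapping: `φ[0,0]=0, φ[0,1]=1, φ[1,1]=2, φ[1,0]=3`. -/
def gray (a b : ℕ) : ℕ := if a = 0 then b else 3 - b

/-- The quaternary sequence `φ[r,s] : t ↦ φ[r(t), s(t)]`. -/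
def graySeq (r s : ℕ → ℕ) (t : ℕ) : ℕ := gray (r t) (s t)

/-- The generating value `U(4) = Σ_{t=0}^{p-1} u(t)·4^t` of a quaternary
sequence `u` of period `p`. -/
def seqVal (p : ℕ) (u : ℕ → ℕ) : ℕ := ∑ t ∈ Finset.range p, u t * 4 ^ t

/-- The 4-adic complexity `Φ₄(u) = ⌊log₄((4^p − 1)/gcd(4^p − 1, U(4)) + 1)⌋`
of a quaternary sequence `u` of period `p`. -/
noncomputable def adicComplexity4 (p : ℕ) (u : ℕ → ℕ) : ℤ :=
  ⌊Real.logb 4 (((4 ^ p - 1 : ℕ) : ℝ) / ((Nat.gcd (4 ^ p - 1) (seqVal p u) : ℕ) : ℝ) + 1)⌋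


lemma aux_geom (p : ℕ) : 3 * ∑ i ∈ range p, 4 ^ i = 4 ^ p - 1 := by
  have := Nat.geomSum_eq (m := 4) (by norm_num) p
  rw [this]
  have h3 : 3 ∣ 4 ^ p - 1 := by
    simpa using Nat.sub_dvd_pow_sub_pow 4 1 p
  simpa using Nat.mul_div_cancel' h3

lemma aux_three (p : ℕ) : (∑ i ∈ range p, 4 ^ i) % 3 = p % 3 := by
  induction p with
  | zero => rfl
  | succ n ih =>
    rw [sum_range_succ]
    have : 4 ^ n % 3 = 1 := by simp [Nat.pow_mod]
    omega

lemma aux_prime (p : ℕ) (hp : p.Prime) (hp8 : p % 8 = 5) (q : ℕ) (hq : q.Prime)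
    (hd : q ∣ ∑ i ∈ range p, 4 ^ i) : (4 : ZMod q) ^ p = 1 ∧ 2 * p ∣ q - 1 := by
  have := Fact.mk hq
  have := Fact.mk hp
  have h4 : (4 : ZMod q) ^ p = 1 := by
    have h1 : q ∣ 4 ^ p - 1 := by rw [← aux_geom]; exact Dvd.dvd.mul_left hd 3
    have h2 : ((4 ^ p - 1 : ℕ) : ZMod q) = 0 := (ZMod.natCast_eq_zero_iff _ _).2 h1
    rw [Nat.cast_sub (Nat.one_le_pow _ _ (by norm_num))] at h2
    push_cast at h2
    linear_combination h2
  have hq2 : q ≠ 2 := by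
    rintro rfl
    have h1 : 2 ∣ 4 ^ p - 1 := by rw [← aux_geom]; exact Dvd.dvd.mul_left hd 3
    have h2 : 2 ∣ 4 ^ p := dvd_pow (by norm_num) hp.ne_zero
    have h3 : 1 ≤ 4 ^ p := Nat.one_le_pow _ _ (by norm_num)
    omega
  have hq3 : q ≠ 3 := by
    rintro rfl
    have h1 := aux_three p
    have h2 : p % 3 = 0 := by omega
    have h3 := (Nat.prime_dvd_prime_iff_eq Nat.prime_three hp).1 (Nat.dvd_of_mod_eq_zero h2)
    omega
  have h41 : (4 : ZMod q) ≠ 1 := by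
    intro h
    have : ((3 : ℕ) : ZMod q) = 0 := by push_cast; linear_combination h
    have := (ZMod.natCast_eq_zero_iff _ _).1 this
    exact hq3 ((Nat.prime_dvd_prime_iff_eq hq Nat.prime_three).1 this)
  have ho : orderOf (4 : ZMod q) = p := orderOf_eq_prime h4 h41
  have h40 : (4 : ZMod q) ≠ 0 := by
    intro h; rw [h, zero_pow hp.ne_zero] at h4; exact zero_ne_one h4
  have hpq : p ∣ q - 1 := ho ▸ ZMod.orderOf_dvd_card_sub_one h40
  refine ⟨h4, ?_⟩
  have hodd := hq.eq_two_or_odd.resolve_left hq2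
  refine Nat.Coprime.mul_dvd_of_dvd_of_dvd ?_ (by omega) hpq
  rw [Nat.prime_two.coprime_iff_not_dvd]; omega

lemma aux_div (p : ℕ) (hp : p.Prime) (hp8 : p % 8 = 5) (d : ℕ)
    (hd : d ∣ ∑ i ∈ range p, 4 ^ i) : d % (2 * p) = 1 := by
  have h5 : 5 ≤ p := by omega
  induction d using Nat.recOnMul with
  | zero =>
    have h := aux_geom p
    rw [zero_dvd_iff] at hd
    rw [hd] at h
    have := Nat.one_lt_pow hp.ne_zero (show 1 < 4 by norm_num)
    omega
  | one => exact Nat.mod_eq_of_lt (by omega)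
  | prime q hq =>
    obtain ⟨k, hk⟩ := (aux_prime p hp hp8 q hq hd).2
    have : q = 1 + 2 * p * k := by have := hq.one_lt; omega
    rw [this, Nat.add_mul_mod_self_left, Nat.mod_eq_of_lt (by omega)]
  | mul a b ha hb =>
    rw [Nat.mul_mod, ha (dvd_of_mul_right_dvd hd), hb (dvd_of_mul_left_dvd hd)]
    exact Nat.mod_eq_of_lt (by omega)

set_option maxHeartbeats 2000000 in
lemma aux_nt (p : ℕ) (hp : p.Prime) (hp8 : p % 8 = 5) (α y : ℤ) (hαy : α ^ 2 + 4 * y ^ 2 = p)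
    (d : ℕ) (hd : d ∣ ∑ i ∈ range p, 4 ^ i)
    (hN : (d : ℤ) ∣ 81 + 54 * p + 25 * p ^ 2 + 96 * y * p - 64 * y ^ 2 * p) :
    d ≤ 1 + 2 * p := by
  have h5 : 5 ≤ p := by omega
  have hmod := aux_div p hp hp8 d hd
  by_cases hp5 : p = 5
  · subst hp5
    have hy1 : y ^ 2 ≤ 1 := by push_cast at hαy; nlinarith [sq_nonneg α]
    have hy2 : y ≤ 1 := by nlinarith
    have hy3 : -1 ≤ y := by nlinarith
    have hle := Nat.le_of_dvd (by decide) hd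
    have hd' : d ∣ 341 := by simpa [sum_range_succ] using hd
    have hd2 : d ∣ Nat.gcd 341 (81 + 54 * 5 + 25 * 5 ^ 2 + 96 * y * 5 - 64 * y ^ 2 * 5).natAbs :=
      Nat.dvd_gcd hd' (Int.natCast_dvd.1 (by exact_mod_cast hN))
    have hα : α ^ 2 = 5 - 4 * y ^ 2 := by push_cast at hαy; linarith
    have hy0 : y ≠ 0 := by
      rintro rfl
      have h1 : α ≤ 3 := by nlinarith
      have h2 : -3 ≤ α := by nlinarith
      interval_cases α <;> omega
    have := Nat.le_of_dvd (by positivity) hd2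
    interval_cases y
    · norm_num at this; omega
    · omega
    · norm_num at this; omega
  by_cases hp13 : p = 13
  · subst hp13
    have hy1 : y ^ 2 ≤ 3 := by push_cast at hαy; nlinarith [sq_nonneg α]
    have hy2 : y ≤ 1 := by nlinarith
    have hy3 : -1 ≤ y := by nlinarith
    have hd' : d ∣ 22369621 := by simpa [sum_range_succ] using hd
    have hd2 : d ∣ Nat.gcd 22369621
        (81 + 54 * 13 + 25 * 13 ^ 2 + 96 * y * 13 - 64 * y ^ 2 * 13).natAbs :=
      Nat.dvd_gcd hd' (Int.natCast_dvd.1 (by exact_mod_cast hN))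
    have hα : α ^ 2 = 13 - 4 * y ^ 2 := by push_cast at hαy; linarith
    have hy0 : y ≠ 0 := by
      rintro rfl
      have h1 : α ≤ 4 := by nlinarith
      have h2 : -4 ≤ α := by nlinarith
      interval_cases α <;> omega
    have := Nat.le_of_dvd (by positivity) hd2
    interval_cases y
    · norm_num at this; omega
    · omega
    · norm_num at this; omega
  have hp29 : 29 ≤ p := by
    by_contra h
    have : p = 21 := by omega
    subst this; norm_num at hp
  by_contra hlt
  push Not at hlt
  obtain ⟨k, hk⟩ : ∃ k, d = 1 + 2 * p * k := ⟨d / (2 * p), by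
    have := Nat.mod_add_div d (2 * p); omega⟩
  have hk2 : 2 ≤ k := by
    by_contra h
    have : k = 0 ∨ k = 1 := by omega
    rcases this with rfl | rfl <;> simp at hk <;> omega
  obtain ⟨E, hE⟩ := hN
  have hp0 : (p : ℤ) ≠ 0 := by exact_mod_cast hp.ne_zero
  have hdZ : (d : ℤ) = 1 + 2 * p * k := by exact_mod_cast hk
  obtain ⟨m, hm⟩ : ∃ m : ℤ, E = 81 + m * p :=
    ⟨54 + 25 * p + 96 * y - 64 * y ^ 2 - 2 * k * E, by rw [hdZ] at hE; linear_combination -hE⟩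
  have key : m + 162 * k + 2 * k * m * p = 54 + 25 * p + 96 * y - 64 * y ^ 2 := by
    apply mul_left_cancel₀ hp0
    rw [hdZ, hm] at hE
    linear_combination -hE
  -- positivity
  have hα1 : 1 ≤ α ^ 2 := by
    have : α ≠ 0 := by rintro rfl; omega
    have := pow_pos (abs_pos.2 this) 2
    rw [sq_abs] at this; omega
  have hpos : 0 < 54 + 25 * (p : ℤ) + 96 * y - 64 * y ^ 2 := by
    nlinarith [sq_nonneg (3 * y + 4)]
  have hNpos : 0 < (d : ℤ) * E := by
    rw [← hE]
    have := mul_pos hpos (show (0 : ℤ) < p by omega)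
    nlinarith
  have hEpos : 0 < E := by
    have : (0 : ℤ) < d := by omega
    exact pos_of_mul_pos_right hNpos this.le
  have hppos : (29 : ℤ) ≤ p := by exact_mod_cast hp29
  -- mod 32
  obtain ⟨r, hr⟩ : ∃ r : ℤ, (p : ℤ) = 8 * r + 5 := ⟨(p / 8 : ℕ), by omega⟩
  have hN32 : ((d : ℤ) * E) % 32 = 16 := by
    rw [← hE, hr]
    have : (81 + 54 * (8 * r + 5) + 25 * (8 * r + 5) ^ 2 + 96 * y * (8 * r + 5)
       - 64 * y ^ 2 * (8 * r + 5)) = 16 + 32 * (30 + 76 * r + 50 * r^2 + 3 * y * (8 * r + 5)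
         - 2 * y ^ 2 * (8 * r + 5)) := by ring
    rw [this, Int.add_mul_emod_self_left]; norm_num
  have hdodd : (d : ℤ) % 2 = 1 := by
    rw [hdZ, mul_assoc]; omega
  have hE32 : E % 32 = 16 := by
    have h1 : E % 32 = 0 ∨ E % 32 ≠ 0 := by omega
    have h2 : 0 ≤ E % 32 := by omega
    have h3 : E % 32 < 32 := by omega
    have h4 : 0 ≤ (d : ℤ) % 32 := by omega
    have h5 : (d : ℤ) % 32 < 32 := by omega
    have h6 : (d : ℤ) % 32 % 2 = 1 := by omega
    rw [Int.mul_emod] at hN32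
    generalize E % 32 = e at *
    generalize (d : ℤ) % 32 = f at *
    interval_cases f <;> omega
  have hm8 : m % 8 = 3 := by
    rw [hm, hr] at hE32
    have h1 : (81 + m * (8 * r + 5)) = 81 + 8 * (m * r) + 5 * m := by ring
    rw [h1] at hE32
    omega
  have hmpos : 0 < m := by
    by_contra h
    have : m ≤ -5 := by omega
    nlinarith
  have hkk : (2 : ℤ) ≤ k := by exact_mod_cast hk2
  have hysq : 96 * y - 64 * y ^ 2 ≤ 36 := by nlinarith [sq_nonneg (4 * y - 3)]
  have hm3 : m = 3 := by
    by_contra h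
    have h11 : 11 ≤ m := by omega
    have : 22 ≤ k * m := by nlinarith
    nlinarith
  subst hm3
  have hk4 : k ≤ 4 := by
    by_contra h
    have : (5 : ℤ) ≤ k := by exact_mod_cast (show 5 ≤ k by omega)
    nlinarith
  interval_cases k
  · -- k = 2
    obtain ⟨q, hq, hqd⟩ := Nat.exists_prime_and_dvd (show d ≠ 1 by omega)
    obtain ⟨h4, j, hj⟩ := aux_prime p hp hp8 q hq (hqd.trans hd)
    have hq1 := hq.one_lt
    have hqle := Nat.le_of_dvd (by omega) hqd
    have hj2 : j = 1 ∨ j = 2 := by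
      have : j ≠ 0 := by rintro rfl; omega
      have : j ≤ 2 := by
        by_contra h
        have : 2 * p * 3 ≤ 2 * p * j := Nat.mul_le_mul_left _ (by omega)
        omega
      omega
    rcases hj2 with rfl | rfl
    · obtain ⟨c, hc⟩ := hqd
      have : q = 2 * p + 1 := by omega
      rw [this, hk] at hc
      rcases c with _ | _ | c
      · omega
      · omega
      · ring_nf at hc; nlinarith
    · have := Fact.mk hq
      have hq5 : q % 8 = 5 := by omega
      have hns : ¬ IsSquare (2 : ZMod q) := by
        rw [ZMod.exists_sq_eq_two_iff (by omega)]; omega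
      have h20 : (2 : ZMod q) ≠ 0 := by
        intro h
        have : ((2 : ℕ) : ZMod q) = 0 := by exact_mod_cast h
        have := Nat.le_of_dvd (by norm_num) ((ZMod.natCast_eq_zero_iff _ _).1 this)
        omega
      apply hns
      rw [ZMod.euler_criterion q h20, show q / 2 = 2 * p by omega, pow_mul]
      norm_num [h4]
  · -- k = 3
    have h7 : 7 ∣ d := by
      have hy6 : y % 7 = 6 := by
        have h1 : (7 * (p : ℤ)) = 64 * y ^ 2 - 96 * y + 435 := by push_cast at key; linarith
        have h2 : (64 * y ^ 2 - 96 * y + 435) % 7 = 0 := by omega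
        have h3 : 0 ≤ y % 7 := by omega
        have h4 : y % 7 < 7 := by omega
        have h5 : (64 * (y % 7) ^ 2 - 96 * (y % 7) + 435) % 7 = 0 := by
          rw [← h2]
          exact Int.ModEq.add (Int.ModEq.sub (Int.ModEq.mul rfl (Int.ModEq.pow 2 (Int.mod_modEq _ _))) (Int.ModEq.mul rfl (Int.mod_modEq _ _))) rfl
        generalize y % 7 = z at *
        interval_cases z <;> omega
      obtain ⟨j, hj⟩ : ∃ j, y = 7 * j - 1 := ⟨y / 7 + 1, by omega⟩
      have h1 : (p : ℤ) = 448 * j ^ 2 - 224 * j + 85 := by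
        rw [hj] at key; push_cast at key; linarith
      have : (p : ℤ) % 7 = 1 := by rw [h1]; omega
      omega
    have := aux_div p hp hp8 7 (h7.trans hd)
    rw [Nat.mod_eq_of_lt (by omega)] at this
    omega
  · -- k = 4
    have h1 : α ^ 2 = 60 * y ^ 2 - 96 * y + 597 := by push_cast at key; linarith
    have h3 : (3 : ℤ) ∣ α := by
      apply Int.prime_three.dvd_of_dvd_pow (n := 2); rw [h1]
      omega
    obtain ⟨a, rfl⟩ := h3
    have h2 : 20 * y ^ 2 - 32 * y + 199 = 3 * a ^ 2 := by linarith
    have h2' : (20 * y ^ 2 - 32 * y + 199) % 3 = 0 := by omega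
    have h3 : 0 ≤ y % 3 := by omega
    have h4 : y % 3 < 3 := by omega
    have h5 : (20 * (y % 3) ^ 2 - 32 * (y % 3) + 199) % 3 = 0 := by
      rw [← h2']
      exact Int.ModEq.add (Int.ModEq.sub (Int.ModEq.mul rfl (Int.ModEq.pow 2 (Int.mod_modEq _ _))) (Int.ModEq.mul rfl (Int.mod_modEq _ _))) rfl
    generalize y % 3 = z at *
    interval_cases z <;> omega
open Complex (I)

lemma aux_cyc (p : ℕ) (hp : p.Prime) (ζ : ℂ) (hζ : IsPrimitiveRoot ζ p) (P : Polynomial ℤ)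
    (hP : Polynomial.aeval ζ P = 0) : ((∑ i ∈ range p, 4 ^ i : ℕ) : ℤ) ∣ P.eval 4 := by
  have := Fact.mk hp
  have h1 : Polynomial.cyclotomic p ℤ ∣ P := by
    rw [Polynomial.cyclotomic_eq_minpoly hζ hp.pos]
    exact minpoly.isIntegrallyClosed_dvd (hζ.isIntegral hp.pos) hP
  have h2 := Polynomial.eval_dvd (x := (4 : ℤ)) h1
  rw [Polynomial.cyclotomic_prime, Polynomial.eval_finsetSum] at h2
  simpa using h2

lemma aux_poly (p : ℕ) (hp : p.Prime) (ζ : ℂ) (hζ : IsPrimitiveRoot ζ p) (U S T : Polynomial ℤ)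
    (β e : ℤ) (he : e ^ 2 = 1)
    (hS : Polynomial.aeval ζ S ^ 2 = (p : ℂ))
    (hT : Polynomial.aeval ζ T ^ 2 = -(p : ℂ) + β * Polynomial.aeval ζ S)
    (hU : 2 * Polynomial.aeval ζ U = e * (3 + Polynomial.aeval ζ S + 2 * Polynomial.aeval ζ T))
    (d : ℕ) (hd : d ∣ ∑ i ∈ range p, 4 ^ i) (hdU : (d : ℤ) ∣ U.eval 4) :
    (d : ℤ) ∣ (9 + 5 * p) ^ 2 - (6 - 4 * β) ^ 2 * p := by
  set N : ℤ := (9 + 5 * p) ^ 2 - (6 - 4 * β) ^ 2 * p with hN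
  let V : Polynomial ℤ := Polynomial.C (2 * e) * (3 + S - 2 * T) *
    (Polynomial.C (9 + 5 * (p : ℤ)) - Polynomial.C (6 - 4 * β) * S)
  have he' : (e : ℂ) ^ 2 = 1 := by exact_mod_cast he
  have h0 : Polynomial.aeval ζ (U * V - Polynomial.C N) = 0 := by
    simp only [V, map_sub, map_mul, map_add, Polynomial.aeval_C, map_ofNat, hN, map_pow, map_natCast,
      map_intCast, eq_intCast, Int.cast_id]
    push_cast
    generalize Polynomial.aeval ζ U = u at *
    generalize Polynomial.aeval ζ S = s at *
    generalize Polynomial.aeval ζ T = t at *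
    linear_combination (e * (3 + s - 2 * t) * ((9 + 5 * p) - (6 - 4 * β) * s)) * hU
      + ((3 + s + 2 * t) * (3 + s - 2 * t) * ((9 + 5 * p) - (6 - 4 * β) * s)) * he'
      + ((9 + 5 * p) - (6 - 4 * β) * s) * (hS - 4 * hT) - (6 - 4 * β)^2 * hS
  have h1 := (Int.natCast_dvd_natCast.2 hd).trans (aux_cyc p hp ζ hζ _ h0)
  rw [Polynomial.eval_sub, Polynomial.eval_mul, Polynomial.eval_C] at h1
  exact (dvd_sub_right (hdU.mul_right _)).1 h1

lemma aux_chi (p : ℕ) [Fact p.Prime] (hp8 : p % 8 = 5) (θ : ℕ)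
    (hθ : IsPrimitiveRoot (θ : ZMod p) (p - 1)) :
    ∃ χ : MulChar (ZMod p) ℂ, χ (θ : ZMod p) = I := by
  have hp1 : p - 1 ≠ 0 := by omega
  obtain ⟨u, hu⟩ := hθ.isUnit hp1
  have hu' : IsPrimitiveRoot u (p - 1) := by
    rw [← hu] at hθ; exact IsPrimitiveRoot.coe_units_iff.1 hθ
  have hcard : Fintype.card (ZMod p)ˣ = p - 1 := ZMod.card_units p
  have hg : ∀ x, x ∈ Subgroup.zpowers u := by
    have := Subgroup.eq_top_of_card_eq (Subgroup.zpowers u) (by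
      rw [Nat.card_zpowers, ← hu'.eq_orderOf, Nat.card_eq_fintype_card, hcard])
    intro x; rw [this]; trivial
  let i : ℂˣ := Units.mk0 I Complex.I_ne_zero
  have hi : i ∈ rootsOfUnity (Fintype.card (ZMod p)ˣ) ℂ := by
    rw [mem_rootsOfUnity, hcard]
    ext
    obtain ⟨k, hk⟩ : ∃ k, p - 1 = 4 * k := ⟨(p - 1) / 4, by omega⟩
    simp [i, hk, pow_mul]
  refine ⟨MulChar.ofRootOfUnity hi hg, ?_⟩
  rw [← hu, MulChar.ofRootOfUnity_spec]; rfl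

lemma aux_adjoin (z : ℂ) (hz : z ∈ Algebra.adjoin ℤ {I}) : ∃ m n : ℤ, z = m + n * I := by
  induction hz using Algebra.adjoin_induction with
  | mem x hx => rw [Set.mem_singleton_iff] at hx; exact ⟨0, 1, by simp [hx]⟩
  | algebraMap r => exact ⟨r, 0, by simp⟩
  | add x y _ _ hx hy =>
    obtain ⟨m, n, rfl⟩ := hx
    obtain ⟨m', n', rfl⟩ := hy
    exact ⟨m + m', n + n', by push_cast; ring⟩
  | mul x y _ _ hx hy =>
    obtain ⟨m, n, rfl⟩ := hx
    obtain ⟨m', n', rfl⟩ := hy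
    exact ⟨m * m' - n * n', m * n' + n * m', by push_cast; linear_combination n * n' * Complex.I_sq⟩

lemma aux_Ipow (n : ℕ) : I ^ n = I ^ (n % 4) := by
  conv_lhs => rw [← Nat.mod_add_div n 4, pow_add, pow_mul, Complex.I_pow_four, one_pow, mul_one]

/-- elements as powers -/
lemma aux_pow (p : ℕ) [Fact p.Prime] (hp8 : p % 8 = 5) (θ : ℕ)
    (hθ : IsPrimitiveRoot (θ : ZMod p) (p - 1)) (a : ZMod p) (ha : a ≠ 0) :
    ∃ n < p - 1, (θ : ZMod p) ^ n = a := by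
  have : NeZero (p - 1) := ⟨by omega⟩
  exact hθ.eq_pow_of_pow_eq_one (ZMod.pow_card_sub_one_eq_one ha)

lemma aux_chi_props (p : ℕ) [Fact p.Prime] (hp8 : p % 8 = 5) (θ : ℕ)
    (hθ : IsPrimitiveRoot (θ : ZMod p) (p - 1)) (χ : MulChar (ZMod p) ℂ) (hχ : χ (θ : ZMod p) = I) :
    χ ^ 4 = 1 ∧ χ ≠ 1 ∧ χ * χ ≠ 1 ∧ χ (-1) = -1 := by
  have hθ0 : (θ : ZMod p) ≠ 0 := by
    intro h; rw [h, MulChar.map_zero] at hχ; exact Complex.I_ne_zero hχ.symm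
  have hθu : IsUnit (θ : ZMod p) := hθ0.isUnit
  have h2 : χ * χ ≠ 1 := by
    intro h
    have := congrArg (fun f : MulChar (ZMod p) ℂ => f (θ : ZMod p)) h
    simp only [MulChar.mul_apply, hχ, MulChar.one_apply hθu, Complex.I_mul_I] at this
    norm_num at this
  refine ⟨?_, ?_, h2, ?_⟩
  · ext a
    obtain ⟨n, -, hn⟩ := aux_pow p hp8 θ hθ a a.ne_zero
    rw [MulChar.pow_apply_coe, MulChar.one_apply_coe, ← hn, map_pow, hχ, ← pow_mul, mul_comm,
      pow_mul, Complex.I_pow_four, one_pow]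
  · rintro rfl; simp at h2
  · obtain ⟨n, hn1, hn⟩ := aux_pow p hp8 θ hθ (-1) (by simp)
    have h1 : (θ : ZMod p) ^ (2 * n) = 1 := by rw [mul_comm, pow_mul, hn]; norm_num
    obtain ⟨k, hk⟩ := hθ.dvd_of_pow_eq_one _ h1
    have hp2 : p ≠ 2 := by omega
    have hk1 : k = 1 := by
      rcases k with _ | _ | k
      · have : n = 0 := by omega
        subst this
        have : Fact (2 < p) := ⟨by omega⟩
        rw [pow_zero] at hn
        exact absurd hn.symm ZMod.neg_one_ne_one
      · rfl
      · exfalso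
        have : (p - 1) * 2 ≤ (p - 1) * (k + 1 + 1) := Nat.mul_le_mul_left _ (by omega)
        omega
    have hn4 : n % 4 = 2 := by rw [hk1] at hk; omega
    rw [← hn, map_pow, hχ, aux_Ipow, hn4, Complex.I_sq]

lemma aux_gauss (p : ℕ) [Fact p.Prime] (hp8 : p % 8 = 5) (χ : MulChar (ZMod p) ℂ)
    (h4 : χ ^ 4 = 1) (h1 : χ ≠ 1) (h2 : χ * χ ≠ 1) (hm : χ (-1) = -1)
    (ψ : AddChar (ZMod p) ℂ) (hψ : ψ.IsPrimitive) :
    ∃ α y : ℤ, α ^ 2 + 4 * y ^ 2 = p ∧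
      gaussSum (χ * χ) ψ ^ 2 = p ∧
      gaussSum χ ψ * gaussSum χ⁻¹ ψ = -p ∧
      gaussSum χ ψ ^ 2 = gaussSum (χ * χ) ψ * (α + 2 * y * I) ∧
      gaussSum χ⁻¹ ψ ^ 2 = gaussSum (χ * χ) ψ * (α - 2 * y * I) := by
  have hI : IsPrimitiveRoot I 4 := by
    refine (IsPrimitiveRoot.iff_def _ _).2 ⟨Complex.I_pow_four, fun l hl => ?_⟩
    rw [aux_Ipow] at hl
    have : l % 4 < 4 := Nat.mod_lt _ (by norm_num)
    apply Nat.dvd_of_mod_eq_zero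
    generalize l % 4 = r at *
    interval_cases r
    · rfl
    · exfalso; have := congrArg Complex.im hl; norm_num at this
    · exfalso; norm_num at hl
    · exfalso; have := congrArg Complex.im hl; norm_num [pow_succ] at this
  have hinv : χ⁻¹ * χ⁻¹ = χ * χ := by
    have : (χ * χ) * (χ * χ) = 1 := by rw [← h4]; simp only [pow_succ, pow_zero, one_mul, mul_assoc]
    rw [← mul_inv]; exact inv_eq_of_mul_eq_one_left this
  obtain ⟨z, hz, hJ⟩ := exists_jacobiSum_eq_neg_one_add (n := 4) (by norm_num) h4 h4
    (by rw [ZMod.card]; omega) hI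
  obtain ⟨m, n, rfl⟩ := aux_adjoin z hz
  have hJ' : jacobiSum χ χ = ((2 * n - 1 : ℤ) : ℂ) + 2 * ((-m : ℤ) : ℂ) * I := by
    rw [hJ]; push_cast
    linear_combination (m + n * I - 2 * n) * Complex.I_sq
  have hJi : jacobiSum χ⁻¹ χ⁻¹ = star (jacobiSum χ χ) := by
    simp only [jacobiSum, star_sum, star_mul, MulChar.star_apply', mul_comm]
  have hJi' : jacobiSum χ⁻¹ χ⁻¹ = ((2 * n - 1 : ℤ) : ℂ) - 2 * ((-m : ℤ) : ℂ) * I := by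
    rw [hJi, hJ']
    simp
  have hprod := jacobiSum_mul_jacobiSum_inv (F := ZMod p) (F' := ℂ) (χ := χ) (φ := χ) (by
    rw [ringChar.eq_zero, ZMod.ringChar_zmod_n]; omega) h1 h1 h2
  rw [hJ', hJi', ZMod.card] at hprod
  have hgi := fun (χ : MulChar (ZMod p) ℂ) (h : χ ≠ 1) =>
    gaussSum_mul_gaussSum_eq_card h hψ
  refine ⟨2 * n - 1, -m, ?_, ?_, ?_, ?_, ?_⟩
  · have : (((2 * n - 1) ^ 2 + 4 * (-m) ^ 2 : ℤ) : ℂ) = ((p : ℤ) : ℂ) := by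
      push_cast at hprod ⊢
      linear_combination hprod + 4 * (m : ℂ) ^ 2 * Complex.I_sq
    exact_mod_cast this
  · have h := hgi _ h2
    rw [mul_inv, hinv, ZMod.card] at h
    have h' := mul_gaussSum_inv_eq_gaussSum (χ * χ) ψ
    rw [MulChar.mul_apply, hm] at h'
    rw [← h, sq, ← h']; ring
  · have h := hgi _ h1
    rw [ZMod.card] at h
    have h' := mul_gaussSum_inv_eq_gaussSum χ⁻¹ ψ
    rw [MulChar.inv_apply', inv_neg_one, hm] at h'
    rw [← h, ← h']; ring
  · rw [sq, ← jacobiSum_mul_nontrivial h2 ψ, hJ']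
  · rw [sq, ← jacobiSum_mul_nontrivial (by rw [hinv]; exact h2) ψ, hJi', hinv]

lemma aux_mem (p : ℕ) [Fact p.Prime] (hp8 : p % 8 = 5) (θ : ℕ)
    (hθ : IsPrimitiveRoot (θ : ZMod p) (p - 1)) (χ : MulChar (ZMod p) ℂ) (hχ : χ (θ : ZMod p) = I)
    (t i : ℕ) (ht : t < p) (n : ℕ) (hn : n < p - 1) (hnt : (θ : ZMod p) ^ n = t) (hi : i < 4) :
    t ∈ cycD p θ i ↔ n % 4 = i := by
  simp only [cycD, mem_image, mem_range]
  constructor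
  · rintro ⟨j, hj, rfl⟩
    rw [ZMod.natCast_mod] at hnt
    push_cast at hnt
    have := hθ.pow_inj hn (show i + 4 * j < p - 1 by omega) hnt
    omega
  · intro h
    refine ⟨n / 4, by omega, ?_⟩
    have h1 : i + 4 * (n / 4) = n := by omega
    rw [h1]
    have h2 : ((θ ^ n : ℕ) : ZMod p) = (t : ℕ) := by push_cast; exact hnt
    rw [ZMod.natCast_eq_natCast_iff'] at h2
    rw [h2, Nat.mod_eq_of_lt ht]

lemma aux_mem0 (p : ℕ) [Fact p.Prime] (θ : ℕ)
    (hθ0 : (θ : ZMod p) ≠ 0) (i : ℕ) : 0 ∉ cycD p θ i := by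
  simp only [cycD, mem_image, mem_range, not_exists, not_and]
  intro j _ h
  have := (ZMod.natCast_eq_zero_iff (θ ^ (i + 4 * j)) p).2 (Nat.dvd_of_mod_eq_zero h)
  push_cast at this
  exact pow_ne_zero _ hθ0 this

lemma aux_vals (p : ℕ) [Fact p.Prime] (hp8 : p % 8 = 5) (θ : ℕ)
    (hθ : IsPrimitiveRoot (θ : ZMod p) (p - 1)) (χ : MulChar (ZMod p) ℂ) (hχ : χ (θ : ZMod p) = I)
    (t : ℕ) : ∃ a b c : ℤ, t < p → 
      (a : ℂ) = (χ * χ) (t : ZMod p) ∧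
      (b : ℂ) = ((1 - I) * χ (t : ZMod p) + (1 + I) * χ⁻¹ (t : ZMod p)) / 2 ∧
      (c : ℂ) = -((1 + I) * χ (t : ZMod p) + (1 - I) * χ⁻¹ (t : ZMod p)) / 2 ∧
      2 * ((graySeq (seqS1 p θ) (seqS2 p θ) t : ℕ) : ℤ) = 3 - (if t = 0 then 3 else 0) - a + 2 * b ∧
      2 * ((graySeq (seqCompl (seqS1 p θ)) (seqS2 p θ) t : ℕ) : ℤ)
        = 3 + (if t = 0 then 3 else 0) + a - 2 * b ∧
      2 * ((graySeq (seqCompl (seqS2 p θ)) (seqS4 p θ) t : ℕ) : ℤ)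
        = 3 + (if t = 0 then 3 else 0) - a + 2 * c := by
  have hθ0 : (θ : ZMod p) ≠ 0 := by
    intro h; rw [h, MulChar.map_zero] at hχ; exact Complex.I_ne_zero hχ.symm
  by_cases ht : t < p
  swap
  · exact ⟨0, 0, 0, fun h => absurd h ht⟩
  by_cases ht0 : t = 0
  · subst ht0
    refine ⟨0, 0, 0, fun _ => ?_⟩
    have h0 : χ 0 = 0 := MulChar.map_zero χ
    have h0i : χ⁻¹ 0 = 0 := MulChar.map_zero χ⁻¹
    simp [graySeq, seqS1, seqS2, seqS4, seqCompl, gray, aux_mem0 p θ hθ0, h0, h0i]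
  have ht0' : (t : ZMod p) ≠ 0 := by
    rw [Ne, ZMod.natCast_eq_zero_iff]
    intro h; have := Nat.le_of_dvd (by omega) h; omega
  obtain ⟨n, hn, hnt⟩ := aux_pow p hp8 θ hθ _ ht0'
  have hmem := fun i hi => aux_mem p hp8 θ hθ χ hχ t i ht n hn hnt hi
  have hv : χ (t : ZMod p) = I ^ (n % 4) := by rw [← hnt, map_pow, hχ, aux_Ipow]
  have hvi : χ⁻¹ (t : ZMod p) = (I ^ (n % 4))⁻¹ := by
    rw [MulChar.inv_apply_eq_inv', hv]
  have hs1 : seqS1 p θ t = if n % 4 = 0 ∨ n % 4 = 1 then 1 else 0 := by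
    simp [seqS1, hmem]
  have hs2 : seqS2 p θ t = if n % 4 = 0 ∨ n % 4 = 3 then 1 else 0 := by
    simp [seqS2, hmem]
  have hs4 : seqS4 p θ t = if n % 4 = 2 ∨ n % 4 = 3 then 1 else 0 := by
    simp [seqS4, hmem]
  have h4 : n % 4 < 4 := Nat.mod_lt _ (by norm_num)
  simp only [graySeq, seqCompl, hs1, hs2, hs4, MulChar.mul_apply, hv, hvi, ht0, if_false]
  generalize n % 4 = r at *
  have hI3 : I ^ 3 = -I := by rw [pow_succ, Complex.I_sq]; ring
  interval_cases r
  · refine ⟨1, 1, -1, fun _ => ?_⟩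
    norm_num [gray]
  · refine ⟨-1, 1, 1, fun _ => ?_⟩
    norm_num [gray]
    linear_combination Complex.I_sq
  · refine ⟨1, -1, 1, fun _ => ?_⟩
    norm_num [gray, Complex.I_sq]
    ring
  · refine ⟨-1, -1, -1, fun _ => ?_⟩
    norm_num [gray, hI3, Complex.I_sq]
    linear_combination -Complex.I_sq

lemma aux_log (p : ℕ) (u : ℕ → ℕ) (hp : 0 < p)
    (h : Nat.gcd (∑ i ∈ range p, 4 ^ i) (seqVal p u) ≤ 1 + 2 * p) :
    ⌊Real.logb 4 (((4 ^ p - 1 : ℕ) : ℝ) / ((3 * (1 + 2 * (p : ℝ)))) + 1)⌋ ≤ adicComplexity4 p u := by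
  unfold adicComplexity4
  have h4 : 1 < 4 ^ p := Nat.one_lt_pow hp.ne' (by norm_num)
  have hgpos : 0 < Nat.gcd (4 ^ p - 1) (seqVal p u) := Nat.gcd_pos_of_pos_left _ (by omega)
  have hMpos : 0 < ∑ i ∈ range p, 4 ^ i := by have := aux_geom p; omega
  have hle : Nat.gcd (4 ^ p - 1) (seqVal p u) ≤ 3 * (1 + 2 * p) := by
    rw [← aux_geom]
    have h1 : Nat.gcd (3 * ∑ i ∈ range p, 4 ^ i) (seqVal p u) ∣
        3 * Nat.gcd (∑ i ∈ range p, 4 ^ i) (seqVal p u) := by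
      rw [← Nat.gcd_mul_left]
      exact Nat.gcd_dvd_gcd_of_dvd_right _ (Dvd.intro_left _ rfl)
    have h2 := Nat.le_of_dvd (Nat.mul_pos (by norm_num) (Nat.gcd_pos_of_pos_left _ hMpos)) h1
    omega
  have hle' : ((Nat.gcd (4 ^ p - 1) (seqVal p u) : ℕ) : ℝ) ≤ 3 * (1 + 2 * (p : ℝ)) := by
    exact_mod_cast hle
  have hg' : (0 : ℝ) < ((Nat.gcd (4 ^ p - 1) (seqVal p u) : ℕ) : ℝ) := by exact_mod_cast hgpos
  apply Int.floor_le_floor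
  apply Real.logb_le_logb_of_le (by norm_num) (by positivity)
  gcongr

/-- polynomial of a sequence -/
noncomputable def auxP (p : ℕ) (f : ℕ → ℤ) : Polynomial ℤ :=
  ∑ t ∈ range p, Polynomial.C (f t) * Polynomial.X ^ t

lemma auxP_aeval (p : ℕ) (f : ℕ → ℤ) (ζ : ℂ) :
    Polynomial.aeval ζ (auxP p f) = ∑ t ∈ range p, (f t : ℂ) * ζ ^ t := by
  simp [auxP]

lemma auxP_eval (p : ℕ) (u : ℕ → ℕ) :
    (auxP p (fun t => (u t : ℤ))).eval 4 = (seqVal p u : ℤ) := by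
  simp [auxP, seqVal, Polynomial.eval_finsetSum]

lemma aux_gsum (p : ℕ) [Fact p.Prime] (ζ : ℂ) (hζ : ζ ^ p = 1) (χ : MulChar (ZMod p) ℂ) :
    gaussSum χ (AddChar.zmodChar p hζ) = ∑ t ∈ range p, χ (t : ZMod p) * ζ ^ t := by
  unfold gaussSum
  symm
  refine sum_bij' (fun t _ => (t : ZMod p)) (fun a _ => a.val) ?_ ?_ ?_ ?_ ?_
  · intro a _; exact mem_univ _
  · intro a _; exact mem_range.2 (ZMod.val_lt a)
  · intro a ha; exact ZMod.val_cast_of_lt (mem_range.1 ha)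
  · intro a _; exact ZMod.natCast_zmod_val a
  · intro a _; rw [AddChar.zmodChar_apply']

theorem theorem2
    (p : ℕ) (hp : p.Prime) (hp8 : p % 8 = 5)
    (x y : ℤ) (hx : x % 4 = 1) (hxy : (p : ℤ) = x ^ 2 + 4 * y ^ 2)
    (θ : ℕ) (hθ : IsPrimitiveRoot (θ : ZMod p) (p - 1))
    (hy : 16 * (((cycD p θ 0).filter (fun a => (a + 1) % p ∈ cycD p θ 1)).card : ℤ)
        = (p : ℤ) + 1 + 2 * x - 8 * y)
    :
    ⌊Real.logb 4 (((4 ^ p - 1 : ℕ) : ℝ) / ((3 * (1 + 2 * (p : ℝ)))) + 1)⌋ ≤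
      adicComplexity4 p (graySeq (seqS1 p θ) (seqS2 p θ)) ∧
    ⌊Real.logb 4 (((4 ^ p - 1 : ℕ) : ℝ) / ((3 * (1 + 2 * (p : ℝ)))) + 1)⌋ ≤
      adicComplexity4 p (graySeq (seqCompl (seqS1 p θ)) (seqS2 p θ)) ∧
    ⌊Real.logb 4 (((4 ^ p - 1 : ℕ) : ℝ) / ((3 * (1 + 2 * (p : ℝ)))) + 1)⌋ ≤
      adicComplexity4 p (graySeq (seqCompl (seqS2 p θ)) (seqS4 p θ)) := by
  have := Fact.mk hp
  obtain ⟨χ, hχ⟩ := aux_chi p hp8 θ hθ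
  obtain ⟨h4, h1, h2, hm⟩ := aux_chi_props p hp8 θ hθ χ hχ
  obtain ⟨ζ, hζ⟩ : ∃ ζ : ℂ, IsPrimitiveRoot ζ p := ⟨_, Complex.isPrimitiveRoot_exp p hp.ne_zero⟩
  have hψ : (AddChar.zmodChar p hζ.pow_eq_one).IsPrimitive :=
    AddChar.zmodChar_primitive_of_primitive_root p hζ
  obtain ⟨α, w, hαw, hs2, hgg, hg1, hg2⟩ := aux_gauss p hp8 χ h4 h1 h2 hm _ hψ
  choose a b c habc using aux_vals p hp8 θ hθ χ hχ
  have hA : Polynomial.aeval ζ (auxP p a) = gaussSum (χ * χ) (AddChar.zmodChar p hζ.pow_eq_one) := by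
    rw [auxP_aeval, aux_gsum]
    exact sum_congr rfl fun t ht => by rw [(habc t (mem_range.1 ht)).1]
  have hB : Polynomial.aeval ζ (auxP p b) =
      ((1 - I) * gaussSum χ (AddChar.zmodChar p hζ.pow_eq_one)
        + (1 + I) * gaussSum χ⁻¹ (AddChar.zmodChar p hζ.pow_eq_one)) / 2 := by
    rw [auxP_aeval, aux_gsum, aux_gsum, mul_sum, mul_sum, ← sum_add_distrib, sum_div]
    exact sum_congr rfl fun t ht => by rw [(habc t (mem_range.1 ht)).2.1]; ring
  have hC : Polynomial.aeval ζ (auxP p c) =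
      -((1 + I) * gaussSum χ (AddChar.zmodChar p hζ.pow_eq_one)
        + (1 - I) * gaussSum χ⁻¹ (AddChar.zmodChar p hζ.pow_eq_one)) / 2 := by
    rw [auxP_aeval, aux_gsum, aux_gsum, mul_sum, mul_sum, ← sum_add_distrib, ← sum_neg_distrib,
      sum_div]
    exact sum_congr rfl fun t ht => by rw [(habc t (mem_range.1 ht)).2.2.1]; ring
  have hgeom : ∑ t ∈ range p, ζ ^ t = 0 := hζ.geom_sum_eq_zero hp.one_lt
  have hdelta : ∑ t ∈ range p, (if t = 0 then (3 : ℂ) else 0) * ζ ^ t = 3 := by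
    simp [hp.pos]
  generalize gaussSum (χ * χ) (AddChar.zmodChar p hζ.pow_eq_one) = s at *
  generalize gaussSum χ (AddChar.zmodChar p hζ.pow_eq_one) = g at *
  generalize gaussSum χ⁻¹ (AddChar.zmodChar p hζ.pow_eq_one) = g' at *
  have hB2 : Polynomial.aeval ζ (auxP p b) ^ 2 = -(p : ℂ) + 2 * w * s := by
    rw [hB]
    linear_combination (-I / 2) * hg1 + (I / 2) * hg2 + hgg + (-2 * w * s + (g - g') ^ 2 / 4) * Complex.I_sq
  have hC2 : Polynomial.aeval ζ (auxP p c) ^ 2 = -(p : ℂ) - 2 * w * s := by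
    rw [hC]
    linear_combination (I / 2) * hg1 - (I / 2) * hg2 + hgg + (2 * w * s + (g - g') ^ 2 / 4) * Complex.I_sq
  have hlin : ∀ (u : ℕ → ℕ) (e₁ e₂ e₃ : ℤ) (f : ℕ → ℤ),
      (∀ t < p, 2 * (u t : ℤ) = 3 + e₁ * (if t = 0 then 3 else 0) + e₂ * a t + e₃ * f t) →
      2 * Polynomial.aeval ζ (auxP p (fun t => (u t : ℤ))) =
        3 * e₁ + e₂ * s + e₃ * Polynomial.aeval ζ (auxP p f) := by
    intro u e₁ e₂ e₃ f hf
    rw [← hA]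
    simp only [auxP_aeval]
    have : (3 : ℂ) * e₁ = 3 * ∑ t ∈ range p, ζ ^ t +
      e₁ * ∑ t ∈ range p, (if t = 0 then (3 : ℂ) else 0) * ζ ^ t := by rw [hgeom, hdelta]; ring
    rw [this]
    simp only [mul_sum]
    rw [← sum_add_distrib, ← sum_add_distrib, ← sum_add_distrib]
    refine sum_congr rfl fun t ht => ?_
    have h := congrArg (Int.cast : ℤ → ℂ) (hf t (mem_range.1 ht))
    push_cast at h ⊢
    linear_combination ζ ^ t * h
  have hfin : ∀ (u : ℕ → ℕ) (S T : Polynomial ℤ) (e : ℤ) (_ : e ^ 2 = 1)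
      (_ : Polynomial.aeval ζ S ^ 2 = (p : ℂ))
      (_ : Polynomial.aeval ζ T ^ 2 = -(p : ℂ) + (2 * w : ℤ) * Polynomial.aeval ζ S)
      (_ : 2 * Polynomial.aeval ζ (auxP p (fun t => (u t : ℤ))) =
        e * (3 + Polynomial.aeval ζ S + 2 * Polynomial.aeval ζ T)),
      ⌊Real.logb 4 (((4 ^ p - 1 : ℕ) : ℝ) / ((3 * (1 + 2 * (p : ℝ)))) + 1)⌋ ≤
        adicComplexity4 p u := by
    intro u S T e he hS hT hU
    apply aux_log p u hp.pos
    have hd1 := Nat.gcd_dvd_left (∑ i ∈ range p, 4 ^ i) (seqVal p u)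
    have hd2 := Nat.gcd_dvd_right (∑ i ∈ range p, 4 ^ i) (seqVal p u)
    have := aux_poly p hp ζ hζ _ S T (2 * w) e he hS hT hU _ hd1 (by
      rw [auxP_eval]; exact_mod_cast hd2)
    refine aux_nt p hp hp8 α w hαw _ hd1 ?_
    convert this using 1
    ring
  refine ⟨?_, ?_, ?_⟩
  · have hU := hlin (graySeq (seqS1 p θ) (seqS2 p θ)) (-1) (-1) 2 b (fun t ht => by
      rw [(habc t ht).2.2.2.1]; ring)
    refine hfin _ (auxP p a) (-auxP p b) (-1) (by norm_num) ?_ ?_ ?_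
    · rw [hA, hs2]
    · rw [map_neg, neg_sq, hB2, hA]; push_cast; ring
    · rw [hU, map_neg, hA]; push_cast; ring
  · have hU := hlin (graySeq (seqCompl (seqS1 p θ)) (seqS2 p θ)) 1 1 (-2) b (fun t ht => by
      rw [(habc t ht).2.2.2.2.1]; ring)
    refine hfin _ (auxP p a) (-auxP p b) 1 (by norm_num) ?_ ?_ ?_
    · rw [hA, hs2]
    · rw [map_neg, neg_sq, hB2, hA]; push_cast; ring
    · rw [hU, map_neg, hA]; push_cast; ring
  · have hU := hlin (graySeq (seqCompl (seqS2 p θ)) (seqS4 p θ)) 1 (-1) 2 c (fun t ht => by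
      rw [(habc t ht).2.2.2.2.2]; ring)
    refine hfin _ (-auxP p a) (auxP p c) 1 (by norm_num) ?_ ?_ ?_
    · rw [map_neg, neg_sq, hA, hs2]
    · rw [hC2, map_neg, hA]; push_cast; ring
    · rw [hU, map_neg, hA]; push_cast; ring
end

section
/- Theorem 3: For the quaternary sequence u₅ = φ[s₁, s₂+1] of period p, the 4-adic complexity satisfies Φ₄(u₅) ≥ ⌊log₄((4^p − 1)/((1+2p)(1+6p)(1+8p)) + 1)⌋. -/
open Finset

/-- autocorrelation -/
def acorr {p : ℕ} [NeZero p] (f : ZMod p → ℤ) (k : ZMod p) : ℤ := ∑ t, f t * f (k - t)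

lemma acorr_sq {p : ℕ} [NeZero p] {R : Type*} [CommRing R] (ψ : AddChar (ZMod p) R)
    (f : ZMod p → ℤ) :
    (∑ t, (f t : R) * ψ t) ^ 2 = ∑ k, (acorr f k : R) * ψ k := by
  unfold acorr
  push_cast
  simp_rw [Finset.sum_mul]
  rw [Finset.sum_comm, sq, Finset.sum_mul_sum]
  refine Finset.sum_congr rfl fun t _ => ?_
  rw [← Equiv.sum_comp (Equiv.subRight t)]
  refine Finset.sum_congr rfl fun k _ => ?_
  have : ψ k = ψ t * ψ (k - t) := by rw [← AddChar.map_add_eq_mul]; congr 1; ring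
  rw [this]
  simp only [Equiv.subRight_apply]
  ring

lemma acorr_sum {p : ℕ} [NeZero p] (f : ZMod p → ℤ) :
    ∑ k, acorr f k = (∑ t, f t) ^ 2 := by
  have := acorr_sq (1 : AddChar (ZMod p) ℤ) f
  simpa using this.symm

lemma acorr_inv {p : ℕ} [NeZero p] [Fact p.Prime] (f : ZMod p → ℤ) (g : ZMod p) (hg : g ≠ 0)
    (hf : ∀ t, f (g * t) = - f t) (k : ZMod p) : acorr f (g * k) = acorr f k := by
  unfold acorr
  rw [← Equiv.sum_comp (Equiv.mulLeft₀ g hg)]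
  refine Finset.sum_congr rfl fun t _ => ?_
  simp only [Equiv.mulLeft₀_apply]
  rw [← mul_sub, hf, hf]; ring

lemma sum_zero_of {p : ℕ} [NeZero p] [Fact p.Prime] (f : ZMod p → ℤ) (g : ZMod p) (hg : g ≠ 0)
    (hf : ∀ t, f (g * t) = - f t) : ∑ t, f t = 0 := by
  have h := Equiv.sum_comp (Equiv.mulLeft₀ g hg) f
  simp only [Equiv.mulLeft₀_apply, hf, Finset.sum_neg_distrib] at h
  omega

lemma mem_cyc {p θ : ℕ} [Fact p.Prime] (hp8 : p % 8 = 5)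
    (hθ : IsPrimitiveRoot (θ : ZMod p) (p - 1)) (n i : ℕ) (hi : i < 4) :
    ((θ : ZMod p) ^ n).val ∈ cycD p θ i ↔ n % 4 = i := by
  have hp0 : 0 < p - 1 := by omega
  unfold cycD
  simp only [Finset.mem_image, Finset.mem_range]
  have key : ∀ m, θ ^ m % p = ((θ : ZMod p) ^ n).val ↔ m ≡ n [MOD (p - 1)] := by
    intro m
    rw [← ZMod.val_natCast, (ZMod.val_injective p).eq_iff, Nat.cast_pow]
    have hu := hθ.isUnit (by omega)
    have h1 := hθ.isUnit_unit (by omega)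
    rw [h1.eq_orderOf, ← pow_eq_pow_iff_modEq, Units.ext_iff]
    simp
  simp only [key]
  have h4 : 4 ∣ p - 1 := by omega
  constructor
  · rintro ⟨j, hj, h⟩
    have := h.of_dvd h4
    unfold Nat.ModEq at this
    omega
  · intro h
    have hlt := Nat.mod_lt n hp0
    refine ⟨n % (p - 1) / 4, by omega, ?_⟩
    have h2 : n % (p - 1) % 4 = n % 4 := Nat.mod_mod_of_dvd n h4
    have : i + 4 * (n % (p - 1) / 4) = n % (p - 1) := by omega
    rw [this]
    exact Nat.mod_modEq _ _

lemma th_ne {p θ : ℕ} [Fact p.Prime] (hp8 : p % 8 = 5)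
    (hθ : IsPrimitiveRoot (θ : ZMod p) (p - 1)) : (θ : ZMod p) ≠ 0 := by
  intro h
  have h1 := hθ.pow_eq_one
  rw [h, zero_pow (by omega)] at h1
  exact zero_ne_one h1

lemma zero_not_mem_cyc {p θ : ℕ} [Fact p.Prime] (hp8 : p % 8 = 5)
    (hθ : IsPrimitiveRoot (θ : ZMod p) (p - 1)) (i : ℕ) : 0 ∉ cycD p θ i := by
  unfold cycD
  simp only [Finset.mem_image, Finset.mem_range, not_exists, not_and]
  intro j _ h
  have h0 : ((θ ^ (i + 4 * j) : ℕ) : ZMod p) = 0 := by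
    rw [ZMod.natCast_eq_zero_iff]; exact Nat.dvd_of_mod_eq_zero h
  rw [Nat.cast_pow] at h0
  exact pow_ne_zero _ (th_ne hp8 hθ) h0

def lamF (p θ : ℕ) (t : ZMod p) : ℤ :=
  if t = 0 then 0 else if t.val ∈ cycD p θ 0 ∪ cycD p θ 2 then 1 else -1

def epsF (p θ : ℕ) (t : ZMod p) : ℤ :=
  if t = 0 then 0 else if t.val ∈ cycD p θ 0 ∪ cycD p θ 1 then 1 else -1

lemma exists_log {p θ : ℕ} [Fact p.Prime] (hp8 : p % 8 = 5)
    (hθ : IsPrimitiveRoot (θ : ZMod p) (p - 1)) (t : ZMod p) (ht : t ≠ 0) :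
    ∃ n, t = (θ : ZMod p) ^ n := by
  have : NeZero (p - 1) := ⟨by omega⟩
  obtain ⟨n, _, h⟩ := hθ.eq_pow_of_pow_eq_one (ZMod.pow_card_sub_one_eq_one ht)
  exact ⟨n, h.symm⟩

section
variable {p θ : ℕ} [Fact p.Prime] (hp8 : p % 8 = 5)
    (hθ : IsPrimitiveRoot (θ : ZMod p) (p - 1))
include hp8 hθ

lemma lam_pow (n : ℕ) : lamF p θ ((θ : ZMod p) ^ n) = if n % 2 = 0 then 1 else -1 := by
  have := pow_ne_zero n (th_ne hp8 hθ)
  simp only [lamF, this, if_false, Finset.mem_union, mem_cyc hp8 hθ n 0 (by norm_num),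
    mem_cyc hp8 hθ n 2 (by norm_num)]
  congr 1
  apply propext; omega

lemma eps_pow (n : ℕ) : epsF p θ ((θ : ZMod p) ^ n) = if n % 4 < 2 then 1 else -1 := by
  have := pow_ne_zero n (th_ne hp8 hθ)
  simp only [epsF, this, if_false, Finset.mem_union, mem_cyc hp8 hθ n 0 (by norm_num),
    mem_cyc hp8 hθ n 1 (by norm_num)]
  congr 1
  apply propext; omega

lemma lam_mul (t : ZMod p) : lamF p θ (θ * t) = - lamF p θ t := by
  by_cases ht : t = 0
  · simp [ht, lamF]
  obtain ⟨n, rfl⟩ := exists_log hp8 hθ t ht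
  rw [← pow_succ', lam_pow hp8 hθ, lam_pow hp8 hθ]
  split_ifs <;> omega

lemma eps_mul (t : ZMod p) : epsF p θ ((θ : ZMod p) ^ 2 * t) = - epsF p θ t := by
  by_cases ht : t = 0
  · simp [ht, epsF]
  obtain ⟨n, rfl⟩ := exists_log hp8 hθ t ht
  rw [← pow_add, eps_pow hp8 hθ, eps_pow hp8 hθ]
  split_ifs <;> omega

lemma neg_one_pow_th : (-1 : ZMod p) = (θ : ZMod p) ^ ((p - 1) / 2) := by
  have h1 : ((θ : ZMod p) ^ ((p - 1) / 2)) ^ 2 = 1 := by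
    rw [← pow_mul, show (p - 1) / 2 * 2 = p - 1 by omega, hθ.pow_eq_one]
  rcases (mul_self_eq_one_iff.mp ((sq _).symm.trans h1)) with h | h
  · exact absurd h (hθ.pow_ne_one_of_pos_of_lt (by omega) (by omega))
  · exact h.symm

lemma lam_neg (t : ZMod p) : lamF p θ (-t) = lamF p θ t := by
  by_cases ht : t = 0
  · simp [ht]
  obtain ⟨n, rfl⟩ := exists_log hp8 hθ t ht
  rw [neg_eq_neg_one_mul, neg_one_pow_th hp8 hθ, ← pow_add, lam_pow hp8 hθ, lam_pow hp8 hθ]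
  split_ifs <;> omega

lemma eps_neg (t : ZMod p) : epsF p θ (-t) = - epsF p θ t := by
  by_cases ht : t = 0
  · simp [ht, epsF]
  obtain ⟨n, rfl⟩ := exists_log hp8 hθ t ht
  rw [neg_eq_neg_one_mul, neg_one_pow_th hp8 hθ, ← pow_add, eps_pow hp8 hθ, eps_pow hp8 hθ]
  split_ifs <;> omega

omit hp8 hθ in
lemma lam_sq (t : ZMod p) : lamF p θ t * lamF p θ t = 1 - if t = 0 then 1 else 0 := by
  unfold lamF; split_ifs <;> norm_num

omit hp8 hθ in
lemma eps_sq (t : ZMod p) : epsF p θ t * epsF p θ t = 1 - if t = 0 then 1 else 0 := by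
  unfold epsF; split_ifs <;> norm_num

lemma acorr_lam_zero : acorr (lamF p θ) 0 = p - 1 := by
  simp [acorr, lam_neg hp8 hθ, lam_sq, Finset.sum_sub_distrib, ZMod.card]

lemma acorr_eps_zero : acorr (epsF p θ) 0 = - (p - 1) := by
  simp [acorr, eps_neg hp8 hθ, eps_sq, Finset.sum_sub_distrib, ZMod.card]

lemma acorr_lam (k : ZMod p) : acorr (lamF p θ) k = -1 + p * if k = 0 then 1 else 0 := by
  have h1 : ∀ n : ℕ, acorr (lamF p θ) ((θ : ZMod p) ^ n) = acorr (lamF p θ) 1 := by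
    intro n
    induction n with
    | zero => simp
    | succ n ih => rw [pow_succ', acorr_inv _ _ (th_ne hp8 hθ) (lam_mul hp8 hθ), ih]
  have h2 : ∀ k : ZMod p, acorr (lamF p θ) k = acorr (lamF p θ) 1 +
      (p - 1 - acorr (lamF p θ) 1) * if k = 0 then 1 else 0 := by
    intro k
    by_cases hk : k = 0
    · simp [hk, acorr_lam_zero hp8 hθ]
    · obtain ⟨n, rfl⟩ := exists_log hp8 hθ k hk
      simp [hk, h1]
  have h3 := acorr_sum (lamF p θ)
  rw [sum_zero_of _ _ (th_ne hp8 hθ) (lam_mul hp8 hθ), Finset.sum_congr rfl fun k _ => h2 k,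
    Finset.sum_add_distrib, ← Finset.mul_sum] at h3
  simp [ZMod.card] at h3
  have hp1 : (p : ℤ) - 1 ≠ 0 := by omega
  have h4 : acorr (lamF p θ) 1 = -1 := by
    apply mul_left_cancel₀ hp1; linarith
  rw [h2 k, h4]; ring

lemma acorr_eps : ∃ m : ℤ, |m| ≤ p + 1 ∧ ∀ k : ZMod p,
    acorr (epsF p θ) k = 1 + m * lamF p θ k - p * if k = 0 then 1 else 0 := by
  set r := acorr (epsF p θ) with hr
  have hinv := acorr_inv (epsF p θ) _ (pow_ne_zero 2 (th_ne hp8 hθ)) (eps_mul hp8 hθ)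
  have h1 : ∀ n : ℕ, r ((θ : ZMod p) ^ n) = if n % 2 = 0 then r 1 else r θ := by
    intro n
    induction n using Nat.strong_induction_on with
    | _ n ih =>
      rcases n with _ | _ | n
      · simp
      · simp
      · rw [show n + 1 + 1 = 2 + n by ring, pow_add, hr, hinv, ← hr, ih n (by omega)]
        simp
  have h2 : ∀ k : ZMod p, 2 * r k = (r 1 + r θ) + (r 1 - r θ) * lamF p θ k
      + (-2 * (p - 1) - (r 1 + r θ)) * if k = 0 then 1 else 0 := by
    intro k
    by_cases hk : k = 0
    · subst hk
      rw [hr, acorr_eps_zero hp8 hθ]; simp [lamF]; ring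
    · obtain ⟨n, rfl⟩ := exists_log hp8 hθ k hk
      rw [h1, lam_pow hp8 hθ]
      simp only [hk, if_false]
      split_ifs <;> ring
  have h3 : 2 * ∑ k, r k = 0 := by
    rw [hr, acorr_sum, sum_zero_of _ _ (pow_ne_zero 2 (th_ne hp8 hθ)) (eps_mul hp8 hθ)]; simp
  rw [Finset.mul_sum, Finset.sum_congr rfl fun k _ => h2 k,
    Finset.sum_add_distrib, Finset.sum_add_distrib, ← Finset.mul_sum, ← Finset.mul_sum,
    sum_zero_of _ _ (th_ne hp8 hθ) (lam_mul hp8 hθ)] at h3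
  simp [ZMod.card] at h3
  have hp1 : (p : ℤ) - 1 ≠ 0 := by omega
  have h4 : r 1 + r θ = 2 := by
    apply mul_left_cancel₀ hp1; linarith
  refine ⟨r 1 - 1, ?_, ?_⟩
  · have : |r 1| ≤ p := by
      rw [hr]; unfold acorr
      refine (Finset.abs_sum_le_sum_abs _ _).trans ?_
      have : ∀ t ∈ (Finset.univ : Finset (ZMod p)), |epsF p θ t * epsF p θ (1 - t)| ≤ 1 := by
        intro t _
        unfold epsF; split_ifs <;> norm_num
      refine (Finset.sum_le_card_nsmul _ _ _ this).trans ?_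
      simp [ZMod.card]
    rw [abs_le] at this ⊢
    omega
  · intro k
    have := h2 k
    rw [show r θ = 2 - r 1 by linarith] at this
    linarith

lemma two_u (t : ZMod p) :
    2 * ((graySeq (seqS1 p θ) (seqCompl (seqS2 p θ)) t.val : ℕ) : ℤ)
      = 3 - (if t = 0 then 1 else 0) + lamF p θ t + 2 * epsF p θ t := by
  by_cases ht : t = 0
  · subst ht
    simp [graySeq, gray, seqS1, seqS2, seqCompl, zero_not_mem_cyc hp8 hθ, lamF, epsF]
  · obtain ⟨n, rfl⟩ := exists_log hp8 hθ t ht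
    rw [lam_pow hp8 hθ, eps_pow hp8 hθ]
    simp only [graySeq, gray, seqS1, seqS2, seqCompl, Finset.mem_union, ht, if_false,
      mem_cyc hp8 hθ n 0 (by norm_num), mem_cyc hp8 hθ n 1 (by norm_num),
      mem_cyc hp8 hθ n 3 (by norm_num)]
    have : n % 4 < 4 := Nat.mod_lt _ (by norm_num)
    split_ifs <;> first | contradiction | omega | simp

lemma main_ring {R : Type*} [CommRing R] (ψ : AddChar (ZMod p) R) (hψ : ∑ t, ψ t = 0)
    (hU : ∑ t : ZMod p, ((graySeq (seqS1 p θ) (seqCompl (seqS2 p θ)) t.val : ℕ) : R) * ψ t = 0) :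
    ∃ m : ℤ, |m| ≤ p + 1 ∧ (((1 + 5 * p) ^ 2 - p * (2 + 4 * m) ^ 2 : ℤ) : R) = 0 := by
  obtain ⟨m, hm, hk⟩ := acorr_eps hp8 hθ
  refine ⟨m, hm, ?_⟩
  have hs := acorr_sq ψ (lamF p θ)
  have hB := acorr_sq ψ (epsF p θ)
  simp only [acorr_lam hp8 hθ] at hs
  simp only [hk] at hB
  set s := ∑ t, (lamF p θ t : R) * ψ t with hsdef
  set B := ∑ t, (epsF p θ t : R) * ψ t with hBdef
  have hs' : s ^ 2 = p := by
    rw [hs]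
    push_cast
    simp [add_mul, Finset.sum_add_distrib, hψ]
  have hB' : B ^ 2 = m * s - p := by
    rw [hB]
    push_cast
    simp [add_mul, sub_mul, Finset.sum_add_distrib, Finset.sum_sub_distrib, hψ, mul_assoc,
      ← Finset.mul_sum, ← hsdef]
  have hU' : -1 + s + 2 * B = 0 := by
    have h2 : ∀ t : ZMod p, 2 * (((graySeq (seqS1 p θ) (seqCompl (seqS2 p θ)) t.val : ℕ) : R) * ψ t)
      = 3 * ψ t - (if t = 0 then 1 else 0) * ψ t + (lamF p θ t : R) * ψ t
        + 2 * ((epsF p θ t : R) * ψ t) := by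
      intro t
      have := congrArg (Int.cast : ℤ → R) (two_u hp8 hθ t)
      push_cast at this
      rw [← mul_assoc, this]; ring
    have h3 := congrArg (2 * ·) hU
    simp only [Finset.mul_sum, h2, Finset.sum_add_distrib, Finset.sum_sub_distrib, mul_zero] at h3
    rw [← Finset.mul_sum, ← Finset.mul_sum, hψ, ← hsdef, ← hBdef] at h3
    simp at h3
    exact h3
  have h5 : (1 + 5 * p : R) = s * (2 + 4 * m) := by
    have e : (2 * B) ^ 2 = (1 - s) ^ 2 := by
      rw [show 2 * B = 1 - s by linear_combination hU']
    linear_combination -hs' - e + 4 * hB'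
  push_cast
  rw [h5]
  linear_combination (2 + 4 * (m : R)) ^ 2 * hs'


omit hp8 hθ in
lemma sum_range_zmod {M : Type*} [AddCommMonoid M] (F : ℕ → M) :
    ∑ t ∈ Finset.range p, F t = ∑ t : ZMod p, F t.val := by
  refine Finset.sum_nbij' (fun n => (n : ZMod p)) (fun t => t.val) ?_ ?_ ?_ ?_ ?_
  · simp
  · intro t _; simpa using ZMod.val_lt t
  · intro n hn; exact ZMod.val_cast_of_lt (Finset.mem_range.mp hn)
  · simp
  · intro n hn; rw [ZMod.val_cast_of_lt (Finset.mem_range.mp hn)]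

lemma three_cop : ¬ 3 ∣ seqVal p (graySeq (seqS1 p θ) (seqCompl (seqS2 p θ))) := by
  intro h
  have h1 := (ZMod.natCast_eq_zero_iff _ 3).mpr h
  unfold seqVal at h1
  rw [sum_range_zmod] at h1
  push_cast at h1
  rw [show (4 : ZMod 3) = 1 by decide] at h1
  simp only [one_pow, mul_one] at h1
  have h2 : 2 * ∑ t : ZMod p, ((graySeq (seqS1 p θ) (seqCompl (seqS2 p θ)) t.val : ℕ) : ℤ)
      = 3 * p - 1 := by
    rw [Finset.mul_sum, Finset.sum_congr rfl fun t _ => two_u hp8 hθ t]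
    simp only [Finset.sum_add_distrib, Finset.sum_sub_distrib, ← Finset.mul_sum,
      sum_zero_of _ _ (th_ne hp8 hθ) (lam_mul hp8 hθ),
      sum_zero_of _ _ (pow_ne_zero 2 (th_ne hp8 hθ)) (eps_mul hp8 hθ)]
    simp [ZMod.card, mul_comm]
  have h3 := congrArg (Int.cast : ℤ → ZMod 3) h2
  push_cast at h3
  rw [h1, show (3 : ZMod 3) = 0 by decide] at h3
  simp at h3

lemma gcd_bound : (Nat.gcd (4 ^ p - 1) (seqVal p (graySeq (seqS1 p θ) (seqCompl (seqS2 p θ)))) : ℤ)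
    ≤ (1 + 2 * p) * (1 + 6 * p) * (1 + 8 * p) := by
  set U := seqVal p (graySeq (seqS1 p θ) (seqCompl (seqS2 p θ))) with hUdef
  set d := Nat.gcd (4 ^ p - 1) U with hd
  have hd3 : Nat.Coprime 3 d := by
    rw [Nat.Prime.coprime_iff_not_dvd Nat.prime_three]
    exact fun h => three_cop hp8 hθ (h.trans (Nat.gcd_dvd_right _ _))
  have h4 : (4 : ZMod d) ^ p = 1 := by
    have h := (ZMod.natCast_eq_zero_iff (4 ^ p - 1) d).mpr (Nat.gcd_dvd_left _ _)
    rw [Nat.cast_sub (Nat.one_le_pow _ _ (by norm_num))] at h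
    push_cast at h
    exact sub_eq_zero.mp h
  have hψ : ∑ t, AddChar.zmodChar p h4 t = 0 := by
    simp only [AddChar.zmodChar_apply]
    rw [← sum_range_zmod (fun t => (4 : ZMod d) ^ t)]
    have h := geom_sum_mul (4 : ZMod d) p
    rw [h4, sub_self] at h
    have hu : IsUnit ((3 : ℕ) : ZMod d) := (ZMod.isUnit_iff_coprime 3 d).mpr hd3
    rw [show (4 : ZMod d) - 1 = ((3 : ℕ) : ZMod d) by push_cast; ring] at h
    exact hu.mul_left_eq_zero.mp h
  have hU : ∑ t : ZMod p, ((graySeq (seqS1 p θ) (seqCompl (seqS2 p θ)) t.val : ℕ) : ZMod d)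
      * AddChar.zmodChar p h4 t = 0 := by
    have h := (ZMod.natCast_eq_zero_iff U d).mpr (Nat.gcd_dvd_right _ _)
    rw [hUdef] at h
    unfold seqVal at h
    rw [sum_range_zmod] at h
    push_cast at h
    simpa only [AddChar.zmodChar_apply] using h
  obtain ⟨m, hm, h⟩ := main_ring hp8 hθ _ hψ hU
  rw [ZMod.intCast_zmod_eq_zero_iff_dvd] at h
  have hp5 : (5 : ℤ) ≤ p := by omega
  have hne : ((1 + 5 * p) ^ 2 - p * (2 + 4 * m) ^ 2 : ℤ) ≠ 0 := by
    intro h0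
    have h1 : (p : ℤ) ∣ 1 := ⟨(2 + 4 * m) ^ 2 - 10 - 25 * p, by linear_combination h0⟩
    have := Int.le_of_dvd one_pos h1
    omega
  have hle := Int.le_of_dvd (abs_pos.mpr hne) ((dvd_abs _ _).mpr h)
  refine hle.trans ?_
  rw [abs_le] at hm ⊢
  have hsq : (2 + 4 * m) ^ 2 ≤ (4 * p + 6) ^ 2 := by
    apply sq_le_sq'
    · linarith
    · linarith
  have h6 : (p : ℤ) * (2 + 4 * m) ^ 2 ≤ p * (4 * p + 6) ^ 2 :=
    mul_le_mul_of_nonneg_left hsq (by linarith)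
  have h7 : (0 : ℤ) ≤ p * (2 + 4 * m) ^ 2 := by positivity
  have h8 : (0 : ℤ) ≤ (p : ℤ) ^ 3 := by positivity
  have h9 : (0 : ℤ) ≤ (p : ℤ) ^ 2 := by positivity
  constructor
  · nlinarith
  · nlinarith
end

theorem theorem3
    (p : ℕ) (hp : p.Prime) (hp8 : p % 8 = 5)
    (x y : ℤ) (hx : x % 4 = 1) (hxy : (p : ℤ) = x ^ 2 + 4 * y ^ 2)
    (θ : ℕ) (hθ : IsPrimitiveRoot (θ : ZMod p) (p - 1))
    (hy : 16 * (((cycD p θ 0).filter (fun a => (a + 1) % p ∈ cycD p θ 1)).card : ℤ)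
        = (p : ℤ) + 1 + 2 * x - 8 * y)
    :
    ⌊Real.logb 4 (((4 ^ p - 1 : ℕ) : ℝ) / (((1 + 2 * (p : ℝ)) * (1 + 6 * (p : ℝ)) * (1 + 8 * (p : ℝ)))) + 1)⌋ ≤
      adicComplexity4 p (graySeq (seqS1 p θ) (seqCompl (seqS2 p θ))) := by
  have : Fact p.Prime := ⟨hp⟩
  have hb := gcd_bound hp8 hθ
  unfold adicComplexity4
  have hpow : 1 ≤ 4 ^ p - 1 := by
    have : 4 ^ 1 ≤ 4 ^ p := Nat.pow_le_pow_right (by norm_num) hp.one_lt.le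
    omega
  have hg : 0 < Nat.gcd (4 ^ p - 1) (seqVal p (graySeq (seqS1 p θ) (seqCompl (seqS2 p θ)))) :=
    Nat.gcd_pos_of_pos_left _ hpow
  set g := Nat.gcd (4 ^ p - 1) (seqVal p (graySeq (seqS1 p θ) (seqCompl (seqS2 p θ))))
  have hb' : (g : ℝ) ≤ (1 + 2 * (p : ℝ)) * (1 + 6 * (p : ℝ)) * (1 + 8 * (p : ℝ)) := by
    exact_mod_cast hb
  have hg' : (0 : ℝ) < g := by exact_mod_cast hg
  apply Int.floor_le_floor
  apply Real.logb_le_logb_of_le (by norm_num) (by positivity)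
  gcongr
end

section
/- Theorem 4: For the quaternary sequences u₇ = φ[s₂, s₄+1], u₁₃ = φ[s₁+1, s₂+1], u₁₅ = φ[s₂+1, s₄+1] of period p, the 4-adic complexity satisfies Φ₄(u_i) ≥ ⌊log₄((4^p − 1)/((1+2p)(1+6p)(1+8p)) + 1)⌋ for i = 7, 13, 15. -/
open Finset

def cconv {p : ℕ} [NeZero p] (K : ZMod p → ℤ) (c : ZMod p) : ℤ := ∑ t, K t * K (c - t)

lemma sum_cconv {p : ℕ} [NeZero p] (K : ZMod p → ℤ) (h0 : ∑ t, K t = 0) :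
    ∑ c, cconv K c = 0 := by
  unfold cconv
  rw [Finset.sum_comm]
  have : ∀ t, ∑ c, K t * K (c - t) = 0 := by
    intro t
    rw [← Finset.mul_sum, Fintype.sum_equiv (Equiv.subRight t) (fun c => K (c - t)) K (fun _ => rfl), h0,
      mul_zero]
  simp [this]

lemma sq_cconv {p : ℕ} [NeZero p] {R : Type*} [CommRing R] (z : R) (hz : z ^ p = 1)
    (K : ZMod p → ℤ) :
    (∑ t, (K t : R) * z ^ t.val) ^ 2 = ∑ c, (cconv K c : R) * z ^ c.val := by
  have hadd : ∀ a b : ZMod p, z ^ (a + b).val = z ^ a.val * z ^ b.val := by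
    intro a b
    rw [ZMod.val_add, ← pow_add]
    conv_rhs => rw [← Nat.mod_add_div (a.val + b.val) p, pow_add, pow_mul, hz, one_pow, mul_one]
  unfold cconv
  push_cast
  simp_rw [Finset.sum_mul]
  rw [Finset.sum_comm, sq, Finset.sum_mul]
  refine Finset.sum_congr rfl fun t _ => ?_
  rw [Finset.mul_sum]
  refine Fintype.sum_equiv (Equiv.addRight t) _ _ fun s => ?_
  simp only [Equiv.coe_addRight, add_sub_cancel_right, hadd]
  ring

lemma cconv_scale {p : ℕ} [Fact p.Prime] (K : ZMod p → ℤ) (a : ZMod p) (ha : a ≠ 0) (ε : ℤ)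
    (hε : ε * ε = 1) (hK : ∀ t, K (a * t) = ε * K t) (c : ZMod p) :
    cconv K (a * c) = cconv K c := by
  unfold cconv
  refine (Fintype.sum_equiv (Equiv.mulLeft₀ a ha) _ _ fun s => ?_).symm
  simp only [Equiv.mulLeft₀_apply]
  rw [← mul_sub, hK, hK]
  linear_combination (- K s * K (c - s)) * hε

lemma sum_odd {p : ℕ} [NeZero p] (K : ZMod p → ℤ) (h : ∀ t, K (-t) = - K t) : ∑ t, K t = 0 := by
  have := Fintype.sum_equiv (Equiv.neg (ZMod p)) (fun t => K (-t)) K (fun _ => rfl)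
  simp only [h, Finset.sum_neg_distrib] at this
  omega

lemma pow_scale {p : ℕ} (K : ZMod p → ℤ) (a : ZMod p) (hK : ∀ t, K (a * t) = - K t) (k : ℕ)
    (t : ZMod p) : K (a ^ k * t) = (-1) ^ k * K t := by
  induction k with
  | zero => simp
  | succ k ih => rw [pow_succ', mul_assoc, hK, ih]; ring

lemma cconv_zero {p : ℕ} [Fact p.Prime] (K : ZMod p → ℤ) (ε : ℤ) (h0 : K 0 = 0)
    (h1 : ∀ t, t ≠ 0 → K t ^ 2 = 1) (h : ∀ t, K (-t) = ε * K t) : cconv K 0 = ε * ((p : ℤ) - 1) := by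
  unfold cconv
  have : ∀ t, K t * K (0 - t) = ε * (1 - if t = 0 then 1 else 0) := by
    intro t
    rw [zero_sub, h]
    by_cases ht : t = 0
    · simp [ht, h0]
    · simp only [ht, if_false]
      linear_combination ε * h1 t ht
  simp_rw [this]
  rw [← Finset.mul_sum, Finset.sum_sub_distrib]
  simp [ZMod.card]

lemma core {p : ℕ} [Fact p.Prime] {R : Type*} [CommRing R] (z : R) (hz : z ^ p = 1)
    (hs : ∑ t : ZMod p, z ^ t.val = 0) (g : ZMod p) (hg0 : g ≠ 0)
    (hg : ∀ t : ZMod p, t ≠ 0 → ∃ k : ℕ, t = g ^ k) (hneg : ∃ q : ℕ, -1 = g ^ (4 * q + 2))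
    (H C : ZMod p → ℤ) (hH0 : H 0 = 0) (hC0 : C 0 = 0) (hH1 : ∀ t, t ≠ 0 → H t ^ 2 = 1)
    (hC1 : C 1 = 1) (hH : ∀ t, H (g ^ 2 * t) = - H t) (hC : ∀ t, C (g * t) = - C t) :
    ∃ m : ℤ, |m| ≤ p ∧
      (∑ t, (H t : R) * z ^ t.val) ^ 2 = -(p : R) + ((m : R) - 1) * ∑ t, (C t : R) * z ^ t.val ∧
      (∑ t, (C t : R) * z ^ t.val) ^ 2 = (p : R) := by
  obtain ⟨q, hq⟩ := hneg
  have hp2 : 2 ≤ p := (Fact.out : p.Prime).two_le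
  have hHn : ∀ t, H (-t) = - H t := by
    intro t
    rw [← neg_one_mul, hq, show 4 * q + 2 = 2 * (2 * q + 1) by ring, pow_mul, pow_scale H _ hH]
    rw [pow_succ, pow_mul]; norm_num
  have hCn : ∀ t, C (-t) = C t := by
    intro t
    rw [← neg_one_mul, hq, show 4 * q + 2 = 2 * (2 * q + 1) by ring, pow_scale C _ hC]
    rw [pow_mul]; norm_num
  have hCk : ∀ k, C (g ^ k) = (-1) ^ k := by
    intro k
    have := pow_scale C g hC k 1
    rwa [mul_one, hC1, mul_one] at this
  have hC2 : ∀ t, t ≠ 0 → C t ^ 2 = 1 := by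
    intro t ht
    obtain ⟨k, rfl⟩ := hg t ht
    rw [hCk, ← pow_mul, mul_comm, pow_mul]; norm_num
  have hsC : ∑ t, C t = 0 := by
    have := Fintype.sum_equiv (Equiv.mulLeft₀ g hg0) (fun t => C (g * t)) C (fun _ => rfl)
    simp only [hC, Finset.sum_neg_distrib] at this
    omega
  have hsH := sum_odd H hHn
  have hCC : ∀ k, cconv C (g ^ k) = cconv C 1 := by
    intro k
    induction k with
    | zero => simp
    | succ k ih =>
      rw [pow_succ', cconv_scale C g hg0 (-1) (by norm_num) (by simpa using hC), ih]
  have hHH : ∀ c, cconv H (g ^ 2 * c) = cconv H c :=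
    cconv_scale H _ (pow_ne_zero 2 hg0) (-1) (by norm_num) (by simpa using hH)
  have hHk : ∀ k c, cconv H (g ^ (2 * k) * c) = cconv H c := by
    intro k c
    induction k with
    | zero => simp
    | succ k ih =>
      rw [show 2 * (k + 1) = 2 + 2 * k by ring, pow_add, mul_assoc, hHH, ih]
  have hC00 := cconv_zero C 1 hC0 hC2 (by simpa using hCn)
  have hH00 := cconv_zero H (-1) hH0 hH1 (by simpa using hHn)
  have eC : ∀ c, cconv C c = cconv C 1 + if c = 0 then (p : ℤ) - 1 - cconv C 1 else 0 := by
    intro c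
    by_cases hc : c = 0
    · simp only [hc, if_true, hC00]; ring
    · obtain ⟨k, rfl⟩ := hg c hc
      simp [hc, hCC]
  have n1 : cconv C 1 = -1 := by
    have h := sum_cconv C hsC
    rw [Finset.sum_congr rfl (fun c _ => eC c), Finset.sum_add_distrib] at h
    simp [ZMod.card] at h
    have : ((p : ℤ) - 1) * (cconv C 1 + 1) = 0 := by linear_combination h
    rcases mul_eq_zero.mp this with h | h <;> omega
  set m := cconv H 1 with hm
  set n := cconv H g with hn
  have eH : ∀ c, 2 * cconv H c = (m + n) + (m - n) * C c +
      if c = 0 then -2 * ((p : ℤ) - 1) - (m + n) else 0 := by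
    intro c
    by_cases hc : c = 0
    · simp only [hc, if_true, hH00, hC0]; ring
    · obtain ⟨k, rfl⟩ := hg c hc
      simp only [hc, if_false, hCk]
      obtain ⟨j, rfl | rfl⟩ := Nat.even_or_odd' k
      · have := hHk j 1
        rw [mul_one] at this
        rw [this, pow_mul, ← hm]; norm_num; ring
      · have := hHk j g
        rw [← pow_succ] at this
        rw [this, pow_succ, pow_mul, ← hn]; norm_num; ring
  have mn : m + n = 2 := by
    have h := sum_cconv H hsH
    have h' : ∑ c, 2 * cconv H c = 0 := by rw [← Finset.mul_sum, h, mul_zero]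
    rw [Finset.sum_congr rfl (fun c _ => eH c), Finset.sum_add_distrib, Finset.sum_add_distrib,
      ← Finset.mul_sum, hsC] at h'
    simp [ZMod.card] at h'
    have : ((p : ℤ) - 1) * (m + n - 2) = 0 := by linear_combination h'
    rcases mul_eq_zero.mp this with h | h <;> omega
  have eH' : ∀ c, cconv H c = 1 + (m - 1) * C c - if c = 0 then (p : ℤ) else 0 := by
    intro c
    have := eH c
    have hn' : n = 2 - m := by omega
    rw [hn'] at this
    split_ifs at this ⊢ <;> linarith
  refine ⟨m, ?_, ?_, ?_⟩
  · have hb : ∀ t, |H t| ≤ 1 := by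
      intro t
      by_cases ht : t = 0
      · simp [ht, hH0]
      · exact (sq_le_one_iff_abs_le_one _).mp (hH1 t ht).le
    rw [hm]
    unfold cconv
    calc _ ≤ ∑ t : ZMod p, |H t * H (1 - t)| := Finset.abs_sum_le_sum_abs _ _
      _ ≤ ∑ t : ZMod p, (1 : ℤ) := by
        refine Finset.sum_le_sum fun t _ => ?_
        rw [abs_mul]
        exact mul_le_one₀ (hb t) (abs_nonneg _) (hb _)
      _ = p := by simp [ZMod.card]
  · rw [sq_cconv z hz]
    have : ∀ c : ZMod p, (cconv H c : R) * z ^ c.val = z ^ c.val + ((m : R) - 1) * ((C c : R) * z ^ c.val)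
        - if c = 0 then (p : R) else 0 := by
      intro c
      rw [eH']
      by_cases hc : c = 0
      · simp [hc, hC0]
      · simp [hc]; ring
    rw [Finset.sum_congr rfl (fun c _ => this c), Finset.sum_sub_distrib, Finset.sum_add_distrib,
      hs, ← Finset.mul_sum]
    simp
    ring
  · rw [sq_cconv z hz]
    have : ∀ c : ZMod p, (cconv C c : R) * z ^ c.val = - z ^ c.val + if c = 0 then (p : R) else 0 := by
      intro c
      rw [eC, n1]
      by_cases hc : c = 0
      · simp [hc]
      · simp [hc]
    rw [Finset.sum_congr rfl (fun c _ => this c), Finset.sum_add_distrib, Finset.sum_neg_distrib, hs]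
    simp

lemma arith_bound (p : ℕ) (hp : 5 ≤ p) (g : ℕ) (m δ : ℤ) (hm : |m| ≤ p) (hδ : δ = 1 ∨ δ = -1)
    (hg : (g : ℤ) ∣ (5 * p + 1) ^ 2 - p * (4 * (m - 1) - 2 * δ) ^ 2) :
    3 * g ≤ (1 + 2 * p) * (1 + 6 * p) * (1 + 8 * p) := by
  set D : ℤ := (5 * p + 1) ^ 2 - p * (4 * (m - 1) - 2 * δ) ^ 2 with hD
  have hne : D ≠ 0 := by
    intro h
    have : (p : ℤ) ∣ 1 := ⟨(4 * (m - 1) - 2 * δ) ^ 2 - 25 * p - 10, by linear_combination h - hD⟩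
    have := Int.le_of_dvd one_pos this
    omega
  have h1 : (g : ℤ) ≤ |D| := Int.le_of_dvd (abs_pos.mpr hne) ((dvd_abs _ _).mpr hg)
  obtain ⟨ha, hb⟩ := abs_le.mp hm
  have hp' : (5 : ℤ) ≤ p := by exact_mod_cast hp
  have hsq : (4 * (m - 1) - 2 * δ) ^ 2 ≤ (4 * (p : ℤ) + 6) ^ 2 := by
    apply sq_le_sq'  <;> rcases hδ with rfl | rfl <;> linarith
  have hpsq : (p : ℤ) * (4 * (m - 1) - 2 * δ) ^ 2 ≤ p * (4 * (p : ℤ) + 6) ^ 2 :=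
    mul_le_mul_of_nonneg_left hsq (by linarith)
  have hnn : 0 ≤ (p : ℤ) * (4 * (m - 1) - 2 * δ) ^ 2 := by positivity
  have h2 : 3 * |D| ≤ (1 + 2 * (p : ℤ)) * (1 + 6 * p) * (1 + 8 * p) := by
    have p2 : 5 * (p : ℤ) ≤ p * p := by nlinarith
    have p3 : 5 * ((p : ℤ) * p) ≤ p * p * p := by nlinarith
    rcases abs_cases D with ⟨h, _⟩ | ⟨h, _⟩ <;> rw [h] <;> nlinarith
  zify
  linarith

lemma mem_cycD_s15 {p θ : ℕ} [Fact p.Prime] (hp8 : p % 8 = 5)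
    (hθ : IsPrimitiveRoot (θ : ZMod p) (p - 1)) (t : ZMod p) (k i : ℕ) (hi : i < 4)
    (ht : t = (θ : ZMod p) ^ k) : t.val ∈ cycD p θ i ↔ k % 4 = i := by
  have hv : ∀ j, θ ^ j % p = ((θ : ZMod p) ^ j).val := by
    intro j
    rw [← Nat.cast_pow, ZMod.val_natCast]
  unfold cycD
  simp only [Finset.mem_image, Finset.mem_range, hv, ht]
  have hd : 4 ∣ p - 1 := by omega
  have hmod : ∀ k, (θ : ZMod p) ^ (k % (p - 1)) = (θ : ZMod p) ^ k := by
    intro k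
    conv_rhs => rw [← Nat.mod_add_div k (p - 1), pow_add, pow_mul, hθ.pow_eq_one, one_pow, mul_one]
  constructor
  · rintro ⟨j, _, h⟩
    have h := ZMod.val_injective p h
    rw [← hmod k, ← hmod (i + 4 * j)] at h
    have hpos : 0 < p - 1 := by omega
    have h := hθ.pow_inj (Nat.mod_lt _ hpos) (Nat.mod_lt _ hpos) h
    have := congrArg (· % 4) h
    simp only [Nat.mod_mod_of_dvd _ hd] at this
    omega
  · intro h
    refine ⟨(k % (p - 1)) / 4, ?_, ?_⟩
    · have : k % (p - 1) < p - 1 := Nat.mod_lt _ (by omega)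
      omega
    · have := Nat.mod_mod_of_dvd k hd
      have h2 : i + 4 * (k % (p - 1) / 4) = k % (p - 1) := by omega
      rw [h2]
      congr 1
      exact hmod k

/-- Function on `ZMod p` depending on the cyclotomic class. -/
def clsFun (p θ : ℕ) (a b c d e : ℤ) (t : ZMod p) : ℤ :=
  if t.val ∈ cycD p θ 0 then a else if t.val ∈ cycD p θ 1 then b else
  if t.val ∈ cycD p θ 2 then c else if t.val ∈ cycD p θ 3 then d else e

lemma zero_cycD {p θ : ℕ} [Fact p.Prime] (hp8 : p % 8 = 5)
    (hθ : IsPrimitiveRoot (θ : ZMod p) (p - 1)) (i : ℕ) : (0 : ZMod p).val ∉ cycD p θ i := by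
  unfold cycD
  simp only [Finset.mem_image, not_exists, not_and]
  intro j _ h
  have hv : θ ^ (i + 4 * j) % p = ((θ : ZMod p) ^ (i + 4 * j)).val := by
    rw [← Nat.cast_pow, ZMod.val_natCast]
  rw [hv] at h
  have h := ZMod.val_injective p h
  exact pow_ne_zero _ (hθ.ne_zero (by omega)) h

lemma gcd_bound_s15 {p θ : ℕ} [Fact p.Prime] (hp8 : p % 8 = 5)
    (hθ : IsPrimitiveRoot (θ : ZMod p) (p - 1)) (u : ℕ → ℕ) (a b σ δ : ℤ)
    (ha : a ^ 2 = 1) (hb : b ^ 2 = 1) (hσ : σ = 1 ∨ σ = -1) (hδ : δ = 1 ∨ δ = -1)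
    (hu0 : 2 * (u 0 : ℤ) = 3 - σ * δ)
    (hu : ∀ t : ZMod p, t ≠ 0 → 2 * (u t.val : ℤ) - 3 = σ * (2 * clsFun p θ a b (-a) (-b) 0 t
      - clsFun p θ 1 (-1) 1 (-1) 0 t)) :
    Nat.gcd (4 ^ p - 1) (seqVal p u) ≤ (1 + 2 * p) * (1 + 6 * p) * (1 + 8 * p) := by
  have hp5 : 5 ≤ p := by omega
  set N := ∑ t ∈ Finset.range p, 4 ^ t with hN
  have hN3 : 4 ^ p - 1 = 3 * N := by
    have := Nat.geomSum_eq (m := 4) (by norm_num) p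
    have h3 : 3 ∣ 4 ^ p - 1 := by simpa using Nat.sub_dvd_pow_sub_pow 4 1 p
    rw [hN, this]
    omega
  have hN0 : 0 < N := Finset.sum_pos (fun _ _ => by positivity) ⟨0, by simp; omega⟩
  set g := Nat.gcd N (seqVal p u) with hg
  have hle : Nat.gcd (4 ^ p - 1) (seqVal p u) ≤ 3 * g := by
    rw [hN3]
    apply Nat.le_of_dvd
    · have : 0 < g := Nat.gcd_pos_of_pos_left _ hN0
      omega
    · exact (Nat.gcd_mul_left_dvd_mul_gcd _ _ _).trans (Nat.mul_dvd_mul (Nat.gcd_dvd_left _ _) dvd_rfl)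
  refine hle.trans ?_
  have sumconv : ∀ f : ℕ → ZMod g, ∑ t ∈ Finset.range p, f t = ∑ t : ZMod p, f t.val := by
    intro f
    symm
    refine Finset.sum_bij (fun t _ => t.val) (fun t _ => by simpa using ZMod.val_lt t)
      (fun s _ t _ h => ZMod.val_injective p h) (fun k hk => ⟨(k : ZMod p), by simp, ?_⟩)
      (fun _ _ => rfl)
    exact ZMod.val_cast_of_lt (by simpa using hk)
  have hs : ∑ t : ZMod p, (4 : ZMod g) ^ t.val = 0 := by
    rw [← sumconv (fun t => (4 : ZMod g) ^ t)]
    have : (N : ZMod g) = 0 := (ZMod.natCast_eq_zero_iff _ _).mpr (Nat.gcd_dvd_left _ _)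
    rw [hN] at this
    push_cast at this
    exact this
  have hz : (4 : ZMod g) ^ p = 1 := by
    have h1 : (N : ZMod g) = 0 := (ZMod.natCast_eq_zero_iff _ _).mpr (Nat.gcd_dvd_left _ _)
    have h2 : 4 ^ p = 3 * N + 1 := by have := Nat.one_le_pow p 4 (by norm_num); omega
    have h3 := congrArg (Nat.cast : ℕ → ZMod g) h2
    push_cast at h3
    rw [h3, h1]; ring
  have hU : ∑ t : ZMod p, (u t.val : ZMod g) * 4 ^ t.val = 0 := by
    rw [← sumconv (fun t => (u t : ZMod g) * 4 ^ t)]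
    have : (seqVal p u : ZMod g) = 0 := (ZMod.natCast_eq_zero_iff _ _).mpr (Nat.gcd_dvd_right _ _)
    unfold seqVal at this
    push_cast at this
    exact this
  have hθ0 : (θ : ZMod p) ≠ 0 := hθ.ne_zero (by omega)
  have hgen : ∀ t : ZMod p, t ≠ 0 → ∃ k : ℕ, t = (θ : ZMod p) ^ k := by
    intro t ht
    have : NeZero (p - 1) := ⟨by omega⟩
    obtain ⟨k, _, h⟩ := hθ.eq_pow_of_pow_eq_one (ZMod.pow_card_sub_one_eq_one ht)
    exact ⟨k, h.symm⟩
  have hneg : ∃ q : ℕ, (-1 : ZMod p) = (θ : ZMod p) ^ (4 * q + 2) := by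
    refine ⟨p / 8, ?_⟩
    have h2 : ((θ : ZMod p) ^ (4 * (p / 8) + 2)) ^ 2 = 1 := by
      rw [← pow_mul, show (4 * (p / 8) + 2) * 2 = p - 1 by omega, hθ.pow_eq_one]
    rcases (sq_eq_sq_iff_eq_or_eq_neg.mp (h2.trans (one_pow 2).symm)) with h | h
    · exact absurd h (hθ.pow_ne_one_of_pos_of_lt (by omega) (by omega))
    · exact h.symm
  have cls0 : ∀ a b c d e, clsFun p θ a b c d e 0 = e := by
    intro a b c d e
    simp [clsFun, - ZMod.val_zero, zero_cycD hp8 hθ]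
  have clsk : ∀ a b c d e k, clsFun p θ a b c d e ((θ : ZMod p) ^ k) =
      if k % 4 = 0 then a else if k % 4 = 1 then b else if k % 4 = 2 then c else d := by
    intro a b c d e k
    unfold clsFun
    simp only [mem_cycD_s15 hp8 hθ _ k 0 (by norm_num) rfl, mem_cycD_s15 hp8 hθ _ k 1 (by norm_num) rfl,
      mem_cycD_s15 hp8 hθ _ k 2 (by norm_num) rfl, mem_cycD_s15 hp8 hθ _ k 3 (by norm_num) rfl]
    split_ifs <;> first | rfl | omega
  obtain ⟨m, hm, h1, h2⟩ := core (4 : ZMod g) hz hs (θ : ZMod p) hθ0 hgen hneg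
    (clsFun p θ a b (-a) (-b) 0) (clsFun p θ 1 (-1) 1 (-1) 0) (cls0 _ _ _ _ _) (cls0 _ _ _ _ _)
    (by
      intro t ht
      obtain ⟨k, rfl⟩ := hgen t ht
      rw [clsk]
      split_ifs <;> simp [ha, hb])
    (by have := clsk 1 (-1) 1 (-1) 0 0
        simpa using this)
    (by
      intro t
      by_cases ht : t = 0
      · simp [ht, cls0]
      · obtain ⟨k, rfl⟩ := hgen t ht
        rw [← pow_add, clsk, clsk]
        split_ifs <;> first | omega | simp)
    (by
      intro t
      by_cases ht : t = 0
      · simp [ht, cls0]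
      · obtain ⟨k, rfl⟩ := hgen t ht
        rw [← pow_succ', clsk, clsk]
        split_ifs <;> first | omega | simp)
  set h := ∑ t, ((clsFun p θ a b (-a) (-b) 0 t : ℤ) : ZMod g) * 4 ^ t.val with hh
  set w := ∑ t, ((clsFun p θ 1 (-1) 1 (-1) 0 t : ℤ) : ZMod g) * 4 ^ t.val with hw
  have key : (σ : ZMod g) * (2 * h - w) = σ * δ := by
    have e : ∀ t : ZMod p, 2 * ((u t.val : ZMod g) * 4 ^ t.val) = 3 * 4 ^ t.val
        + σ * (2 * (((clsFun p θ a b (-a) (-b) 0 t : ℤ) : ZMod g) * 4 ^ t.val)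
          - ((clsFun p θ 1 (-1) 1 (-1) 0 t : ℤ) : ZMod g) * 4 ^ t.val)
        - if t = 0 then (σ * δ : ZMod g) else 0 := by
      intro t
      by_cases ht : t = 0
      · have := congrArg (Int.cast : ℤ → ZMod g) hu0
        push_cast at this
        simp [ht, cls0, this]
      · have := congrArg (Int.cast : ℤ → ZMod g) (hu t ht)
        push_cast at this
        simp only [ht, if_false]
        linear_combination (4 : ZMod g) ^ t.val * this
    have e2 : ∑ t : ZMod p, 2 * ((u t.val : ZMod g) * 4 ^ t.val) = 0 := by
      rw [← Finset.mul_sum, hU, mul_zero]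
    rw [Finset.sum_congr rfl (fun t _ => e t), Finset.sum_sub_distrib, Finset.sum_add_distrib,
      ← Finset.mul_sum, hs, ← Finset.mul_sum, Finset.sum_sub_distrib, ← Finset.mul_sum, ← hh, ← hw] at e2
    simp at e2
    linear_combination e2
  have key2 : 2 * h = w + δ := by
    rcases hσ with rfl | rfl <;> push_cast at key
    · linear_combination key
    · linear_combination - key
  have hδ2 : (δ : ZMod g) ^ 2 = 1 := by rcases hδ with rfl | rfl <;> simp
  have lin : (5 * (p : ZMod g) + 1) = (4 * (m - 1) - 2 * δ) * w := by
    linear_combination 4 * h1 - (2 * h + w + δ) * key2 - h2 - hδ2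
  apply arith_bound p hp5 g m δ hm hδ
  apply (ZMod.intCast_zmod_eq_zero_iff_dvd _ _).mp
  push_cast
  rw [lin]
  linear_combination (4 * ((m : ZMod g) - 1) - 2 * δ) ^ 2 * h2

lemma final_bound {p : ℕ} (u : ℕ → ℕ) (hp : 5 ≤ p)
    (h : Nat.gcd (4 ^ p - 1) (seqVal p u) ≤ (1 + 2 * p) * (1 + 6 * p) * (1 + 8 * p)) :
    ⌊Real.logb 4 (((4 ^ p - 1 : ℕ) : ℝ) / (((1 + 2 * (p : ℝ)) * (1 + 6 * (p : ℝ)) * (1 + 8 * (p : ℝ)))) + 1)⌋ ≤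
      adicComplexity4 p u := by
  unfold adicComplexity4
  apply Int.floor_le_floor
  apply Real.logb_le_logb_of_le (by norm_num) (by positivity)
  have hpos : 0 < Nat.gcd (4 ^ p - 1) (seqVal p u) := by
    apply Nat.gcd_pos_of_pos_left
    have : 4 ^ 1 ≤ 4 ^ p := Nat.pow_le_pow_right (by norm_num) (by omega)
    omega
  have h' : ((Nat.gcd (4 ^ p - 1) (seqVal p u) : ℕ) : ℝ) ≤
      (1 + 2 * (p : ℝ)) * (1 + 6 * (p : ℝ)) * (1 + 8 * (p : ℝ)) := by exact_mod_cast h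
  have hpos' : (0 : ℝ) < ((Nat.gcd (4 ^ p - 1) (seqVal p u) : ℕ) : ℝ) := by exact_mod_cast hpos
  gcongr

lemma cls_cases {p θ : ℕ} [Fact p.Prime] (hp8 : p % 8 = 5)
    (hθ : IsPrimitiveRoot (θ : ZMod p) (p - 1)) (t : ZMod p) (ht : t ≠ 0) :
    ∃ i < 4, ∀ j < 4, (t.val ∈ cycD p θ j ↔ i = j) := by
  have : NeZero (p - 1) := ⟨by omega⟩
  obtain ⟨k, _, h⟩ := hθ.eq_pow_of_pow_eq_one (ZMod.pow_card_sub_one_eq_one ht)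
  exact ⟨k % 4, Nat.mod_lt _ (by norm_num), fun j hj => mem_cycD_s15 hp8 hθ t k j hj h.symm⟩

theorem theorem4
    (p : ℕ) (hp : p.Prime) (hp8 : p % 8 = 5)
    (x y : ℤ) (hx : x % 4 = 1) (hxy : (p : ℤ) = x ^ 2 + 4 * y ^ 2)
    (θ : ℕ) (hθ : IsPrimitiveRoot (θ : ZMod p) (p - 1))
    (hy : 16 * (((cycD p θ 0).filter (fun a => (a + 1) % p ∈ cycD p θ 1)).card : ℤ)
        = (p : ℤ) + 1 + 2 * x - 8 * y)
    :
    ⌊Real.logb 4 (((4 ^ p - 1 : ℕ) : ℝ) / (((1 + 2 * (p : ℝ)) * (1 + 6 * (p : ℝ)) * (1 + 8 * (p : ℝ)))) + 1)⌋ ≤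
      adicComplexity4 p (graySeq (seqS2 p θ) (seqCompl (seqS4 p θ))) ∧
    ⌊Real.logb 4 (((4 ^ p - 1 : ℕ) : ℝ) / (((1 + 2 * (p : ℝ)) * (1 + 6 * (p : ℝ)) * (1 + 8 * (p : ℝ)))) + 1)⌋ ≤
      adicComplexity4 p (graySeq (seqCompl (seqS1 p θ)) (seqCompl (seqS2 p θ))) ∧
    ⌊Real.logb 4 (((4 ^ p - 1 : ℕ) : ℝ) / (((1 + 2 * (p : ℝ)) * (1 + 6 * (p : ℝ)) * (1 + 8 * (p : ℝ)))) + 1)⌋ ≤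
      adicComplexity4 p (graySeq (seqCompl (seqS2 p θ)) (seqCompl (seqS4 p θ))) := by
  have : Fact p.Prime := ⟨hp⟩
  have z : ∀ i, 0 ∉ cycD p θ i := by
    intro i
    have := zero_cycD hp8 hθ i
    rwa [ZMod.val_zero] at this
  refine ⟨final_bound _ (by omega) (gcd_bound_s15 hp8 hθ _ 1 (-1) 1 1 ?_ ?_ ?_ ?_ ?_ ?_),
    final_bound _ (by omega) (gcd_bound_s15 hp8 hθ _ (-1) (-1) 1 (-1) ?_ ?_ ?_ ?_ ?_ ?_),
    final_bound _ (by omega) (gcd_bound_s15 hp8 hθ _ 1 (-1) (-1) 1 ?_ ?_ ?_ ?_ ?_ ?_)⟩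
  all_goals first
    | norm_num; done
    | simp [graySeq, gray, seqCompl, seqS1, seqS2, seqS4, z]; done
    | intro t ht
      obtain ⟨i, hi, h⟩ := cls_cases hp8 hθ t ht
      have h0 := h 0 (by norm_num)
      have h1 := h 1 (by norm_num)
      have h2 := h 2 (by norm_num)
      have h3 := h 3 (by norm_num)
      clear h
      interval_cases i <;>
        simp [graySeq, gray, seqCompl, seqS1, seqS2, seqS4, clsFun, h0, h1, h2, h3]
end
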